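/- arXiv:1609.04943 — 10 statements merged into one kernel-verified Lean document; each statement's English description precedes it below -/
import Mathlib

section
/- Let (Ω,Σ,μ) be a probability space and φ : Ω → Ω a bimeasurable measure-preserving transformation with Perron–Frobenius operator P on L¹(Ω,Σ,μ). Then the following are equivalent: (i) for every A ∈ Σ there exists a measurable set L such that μ(φⁿ(A) Δ L) → 0 as n → ∞; (ii) for every f ∈ L¹(Ω,Σ,μ) the sequence (Pⁿf) converges in the L¹-norm; (iii) every set B ∈ Σ_∞ satisfies μ(B Δ φ⁻¹(B)) = 0. -/
open MeasureTheory Filter Set Topology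
open scoped symmDiff ENNReal

theorem aux_hilbert {E : Type*} [NormedAddCommGroup E] [InnerProductSpace ℝ E] [CompleteSpace E]
    (U : ℕ → Submodule ℝ E) [∀ n, (U n).HasOrthogonalProjection] (hU : Antitone U) (x : E) :
    ∃ y : E, (∀ n, y ∈ U n) ∧ Tendsto (fun n => (U n).starProjection x) atTop (𝓝 y) := by
  have hmono : Monotone (fun n => (U n)ᗮ) := fun a b h => Submodule.orthogonal_le (hU h)
  have h := Submodule.starProjection_tendsto_closure_iSup (fun n => (U n)ᗮ) hmono x
  refine ⟨x - ((⨆ n, (U n)ᗮ).topologicalClosure.starProjection x), ?_, ?_⟩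
  · intro n
    have h1 := Submodule.sub_starProjection_mem_orthogonal
      (K := (⨆ n, (U n)ᗮ).topologicalClosure) x
    have h2 : (U n)ᗮ ≤ (⨆ n, (U n)ᗮ).topologicalClosure :=
      (le_iSup (fun n => (U n)ᗮ) n).trans (Submodule.le_topologicalClosure _)
    have h3 := Submodule.orthogonal_le h2 h1
    rwa [Submodule.orthogonal_orthogonal] at h3
  · have h4 := h.const_sub x
    refine h4.congr fun n => ?_
    rw [Submodule.starProjection_orthogonal']
    simp

theorem aux_inv {Ω : Type*} [m : MeasurableSpace Ω] (μ : Measure Ω)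
    (φ : Ω → Ω) (hmp : MeasurePreserving φ μ μ)
    (h3 : ∀ B : Set Ω, (∀ n : ℕ, ∃ A : Set Ω, MeasurableSet A ∧ B = φ^[n] ⁻¹' A) →
        μ (B ∆ (φ ⁻¹' B)) = 0) (h : Ω → ℝ)
    (hanti : Antitone fun n : ℕ => m.comap φ^[n])
    (hh : ∀ n : ℕ, AEStronglyMeasurable[m.comap φ^[n]] h μ) : h ∘ φ =ᵐ[μ] h := by
  choose k hk1 hk2 using hh
  set g : Ω → ℝ := fun x => limsup (fun n => k n x) atTop with hg
  have hgm : ∀ j, Measurable[m.comap φ^[j]] g := by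
    intro j
    have : g = fun x => limsup (fun n => k (n + j) x) atTop := by
      ext x
      exact (limsup_nat_add (fun n => k n x) j).symm
    rw [this]
    refine Measurable.limsup (mδ := m.comap φ^[j]) (fun n => ?_)
    exact (hk1 (n + j)).measurable.mono (hanti (Nat.le_add_left j n)) le_rfl
  have hgh : h =ᵐ[μ] g := by
    filter_upwards [ae_all_iff.2 hk2] with x hx
    simp [hg, ← hx]
  have hq : ∀ q : ℚ, ∀ᵐ x ∂μ, (g x < q ↔ g (φ x) < q) := by
    intro q
    have h0 := h3 (g ⁻¹' Iio (q : ℝ)) (fun n => by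
      obtain ⟨A, hA, hA'⟩ := hgm n (measurableSet_Iio (a := (q : ℝ)))
      exact ⟨A, hA, hA'.symm⟩)
    rw [measure_symmDiff_eq_zero_iff] at h0
    filter_upwards [h0.mem_iff] with x hx
    simpa using hx
  have hgg : g ∘ φ =ᵐ[μ] g := by
    filter_upwards [ae_all_iff.2 hq] with x hx
    refine le_antisymm ?_ ?_
    · by_contra! hlt
      obtain ⟨q, hq1, hq2⟩ := exists_rat_btwn hlt
      exact lt_asymm ((hx q).1 hq1) hq2
    · by_contra! hlt
      obtain ⟨q, hq1, hq2⟩ := exists_rat_btwn hlt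
      exact lt_asymm ((hx q).2 hq1) hq2
  exact ((hmp.quasiMeasurePreserving.ae_eq_comp hgh).trans hgg).trans hgh.symm

theorem aux_anti {Ω : Type*} [m : MeasurableSpace Ω] (φ : Ω → Ω) (hm : Measurable φ) : Antitone fun n : ℕ => m.comap φ^[n] := by
  refine antitone_nat_of_succ_le fun n => ?_
  rintro s ⟨A, hA, rfl⟩
  refine ⟨φ ⁻¹' A, hm hA, ?_⟩
  rw [Function.iterate_succ', preimage_comp]

theorem aux_iter {Ω : Type*} [m : MeasurableSpace Ω] (μ : Measure Ω) [IsProbabilityMeasure μ]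
    (φ : Ω → Ω) (hmp : MeasurePreserving φ μ μ)
    (P : Lp ℝ 1 μ →L[ℝ] Lp ℝ 1 μ)
    (hP : ∀ (f : Lp ℝ 1 μ) (A : Set Ω), MeasurableSet A →
      ∫ x in A, (P f) x ∂μ = ∫ x in φ ⁻¹' A, f x ∂μ)
    (n : ℕ) (f : Lp ℝ 1 μ) (A : Set Ω) (hA : MeasurableSet A) :
    ∫ x in A, ((P ^ n) f) x ∂μ = ∫ x in φ^[n] ⁻¹' A, f x ∂μ := by
  induction n generalizing f with
  | zero => simp
  | succ n ih =>
    rw [pow_succ, mul_apply_eq_comp, ih, hP _ _ (hmp.measurable.iterate n hA),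
      ← preimage_comp, ← Function.iterate_succ]

theorem aux_cond {Ω : Type*} [m : MeasurableSpace Ω] (μ : Measure Ω) [IsProbabilityMeasure μ]
    (φ : Ω → Ω) (hmp : MeasurePreserving φ μ μ)
    (P : Lp ℝ 1 μ →L[ℝ] Lp ℝ 1 μ)
    (hP : ∀ (f : Lp ℝ 1 μ) (A : Set Ω), MeasurableSet A →
      ∫ x in A, (P f) x ∂μ = ∫ x in φ ⁻¹' A, f x ∂μ)
    (n : ℕ) (f : Lp ℝ 1 μ) :
    ((P ^ n) f : Ω → ℝ) ∘ φ^[n] =ᵐ[μ] μ[f | m.comap φ^[n]] := by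
  have hn := hmp.iterate n
  have hle : m.comap φ^[n] ≤ m := hn.measurable.comap_le
  have hint : Integrable ((P ^ n) f) μ := L1.integrable_coeFn _
  refine ae_eq_condExp_of_forall_setIntegral_eq hle (L1.integrable_coeFn _) ?_ ?_ ?_
  · intro s _ _
    exact (hn.integrable_comp_of_integrable hint).integrableOn
  · rintro s ⟨A, hA, rfl⟩ _
    rw [← aux_iter μ φ hmp P hP n f A hA]
    have := setIntegral_map (μ := μ) (g := φ^[n]) hA (f := ((P ^ n) f : Ω → ℝ))
      (by rw [hn.map_eq]; exact hint.aestronglyMeasurable) hn.measurable.aemeasurable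
    rw [hn.map_eq] at this
    exact this.symm
  · have hs := (Lp.stronglyMeasurable ((P ^ n) f))
    exact (hs.comp_measurable (comap_measurable φ^[n])).aestronglyMeasurable

theorem aux_norm {Ω : Type*} [m : MeasurableSpace Ω] (μ : Measure Ω) [IsProbabilityMeasure μ]
    (φ : Ω → Ω) (hmp : MeasurePreserving φ μ μ)
    (P : Lp ℝ 1 μ →L[ℝ] Lp ℝ 1 μ)
    (hP : ∀ (f : Lp ℝ 1 μ) (A : Set Ω), MeasurableSet A →
      ∫ x in A, (P f) x ∂μ = ∫ x in φ ⁻¹' A, f x ∂μ)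
    (n : ℕ) (f : Lp ℝ 1 μ) : ‖(P ^ n) f‖ ≤ ‖f‖ := by
  have hn := hmp.iterate n
  rw [Lp.norm_def, Lp.norm_def]
  refine ENNReal.toReal_mono (Lp.eLpNorm_ne_top f) ?_
  rw [← eLpNorm_comp_measurePreserving (Lp.aestronglyMeasurable _) hn,
    eLpNorm_congr_ae (aux_cond μ φ hmp P hP n f)]
  exact eLpNorm_condExp_le_eLpNorm _ le_rfl

theorem aux_L2 {Ω : Type*} [m : MeasurableSpace Ω] (μ : Measure Ω) [IsProbabilityMeasure μ]
    (φ : Ω → Ω) (hmp : MeasurePreserving φ μ μ)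
    (P : Lp ℝ 1 μ →L[ℝ] Lp ℝ 1 μ)
    (hP : ∀ (f : Lp ℝ 1 μ) (A : Set Ω), MeasurableSet A →
      ∫ x in A, (P f) x ∂μ = ∫ x in φ ⁻¹' A, f x ∂μ)
    (h3 : ∀ B : Set Ω, (∀ n : ℕ, ∃ A : Set Ω, MeasurableSet A ∧ B = φ^[n] ⁻¹' A) →
        μ (B ∆ (φ ⁻¹' B)) = 0) (f : Lp ℝ 1 μ) (hf : MemLp f 2 μ) :
    ∃ g : Lp ℝ 1 μ, Tendsto (fun n : ℕ => (P ^ n) f) atTop (𝓝 g) := by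
  have hle : ∀ n : ℕ, m.comap φ^[n] ≤ m := fun n => (hmp.iterate n).measurable.comap_le
  have hanti := aux_anti φ hmp.measurable
  have : ∀ n, Fact (m.comap φ^[n] ≤ m) := fun n => ⟨hle n⟩
  obtain ⟨y, hy, hlim⟩ := aux_hilbert (fun n => lpMeas ℝ ℝ (m.comap φ^[n]) 2 μ)
    (fun a b hab x hx => by
      rw [mem_lpMeas_iff_aestronglyMeasurable] at hx ⊢
      exact hx.mono (hanti hab)) (hf.toLp f)
  have hinv := aux_inv μ φ hmp h3 y hanti
    (fun n => mem_lpMeas_iff_aestronglyMeasurable.1 (hy n))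
  have hinvn : ∀ n : ℕ, (y : Ω → ℝ) ∘ φ^[n] =ᵐ[μ] y := by
    intro n
    induction n with
    | zero => rfl
    | succ n ih =>
      rw [Function.iterate_succ, ← Function.comp_assoc]
      exact (hmp.quasiMeasurePreserving.ae_eq_comp ih).trans hinv
  have hy1 : MemLp y 1 μ := (Lp.memLp y).mono_exponent one_le_two
  refine ⟨hy1.toLp y, ?_⟩
  rw [Lp.tendsto_Lp_iff_tendsto_eLpNorm'] at hlim ⊢
  refine tendsto_of_tendsto_of_tendsto_of_le_of_le tendsto_const_nhds hlim
    (fun n => zero_le) (fun n => ?_)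
  have hn := hmp.iterate n
  have e1 : (((P ^ n) f : Ω → ℝ) - (hy1.toLp y : Ω → ℝ)) ∘ φ^[n] =ᵐ[μ]
      ((lpMeas ℝ ℝ (m.comap φ^[n]) 2 μ).starProjection (hf.toLp f) : Ω → ℝ) - (y : Ω → ℝ) := by
    have a1 := aux_cond μ φ hmp P hP n f
    have a2 := MemLp.condExpL2_ae_eq_condExp (𝕜 := ℝ) (E := ℝ) (hle n) hf
    have a3 := (hn.quasiMeasurePreserving.ae_eq_comp hy1.coeFn_toLp).trans (hinvn n)
    have a4 : ((lpMeas ℝ ℝ (m.comap φ^[n]) 2 μ).starProjection (hf.toLp f) : Ω → ℝ) =ᵐ[μ]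
      μ[f | m.comap φ^[n]] := a2
    exact (a1.trans a4.symm).sub a3
  dsimp only
  rw [← eLpNorm_comp_measurePreserving
    ((Lp.aestronglyMeasurable _).sub (Lp.aestronglyMeasurable _)) hn, eLpNorm_congr_ae e1]
  exact eLpNorm_le_eLpNorm_of_exponent_le one_le_two
    ((Lp.aestronglyMeasurable _).sub (Lp.aestronglyMeasurable _))

theorem aux_32 {Ω : Type*} [m : MeasurableSpace Ω] (μ : Measure Ω) [IsProbabilityMeasure μ]
    (φ : Ω → Ω) (hmp : MeasurePreserving φ μ μ)
    (P : Lp ℝ 1 μ →L[ℝ] Lp ℝ 1 μ)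
    (hP : ∀ (f : Lp ℝ 1 μ) (A : Set Ω), MeasurableSet A →
      ∫ x in A, (P f) x ∂μ = ∫ x in φ ⁻¹' A, f x ∂μ)
    (h3 : ∀ B : Set Ω, (∀ n : ℕ, ∃ A : Set Ω, MeasurableSet A ∧ B = φ^[n] ⁻¹' A) →
        μ (B ∆ (φ ⁻¹' B)) = 0) (f : Lp ℝ 1 μ) :
    ∃ g : Lp ℝ 1 μ, Tendsto (fun n : ℕ => (P ^ n) f) atTop (𝓝 g) := by
  refine cauchySeq_tendsto_of_complete ?_
  rw [Metric.cauchySeq_iff]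
  intro ε hε
  obtain ⟨g, hg1, hg2⟩ := (Lp.memLp f).exists_simpleFunc_eLpNorm_sub_lt ENNReal.one_ne_top
    (ε := ENNReal.ofReal (ε / 3)) (by simpa using hε)
  set G : Lp ℝ 1 μ := hg2.toLp g
  have hG2 : MemLp G 2 μ := (g.memLp_of_isFiniteMeasure 2 μ).ae_eq hg2.coeFn_toLp.symm
  have hfG : ‖f - G‖ < ε / 3 := by
    rw [Lp.norm_def]
    refine (ENNReal.toReal_lt_of_lt_ofReal ?_)
    refine lt_of_eq_of_lt (eLpNorm_congr_ae ?_) hg1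
    exact (Lp.coeFn_sub _ _).trans (EventuallyEq.rfl.sub hg2.coeFn_toLp)
  obtain ⟨l, hl⟩ := aux_L2 μ φ hmp P hP h3 G hG2
  obtain ⟨N, hN⟩ := Metric.cauchySeq_iff.1 hl.cauchySeq (ε / 3) (by positivity)
  refine ⟨N, fun a ha b hb => ?_⟩
  have h1 := hN a ha b hb
  have h2 := aux_norm μ φ hmp P hP a (f - G)
  have h4 := aux_norm μ φ hmp P hP b (f - G)
  rw [map_sub, ← dist_eq_norm] at h2 h4
  have t1 := dist_triangle ((P ^ a) f) ((P ^ a) G) ((P ^ b) f)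
  have t2 := dist_triangle ((P ^ a) G) ((P ^ b) G) ((P ^ b) f)
  rw [dist_comm ((P ^ b) G) ((P ^ b) f)] at t2
  linarith

theorem aux_23 {Ω : Type*} [m : MeasurableSpace Ω] (μ : Measure Ω) [IsProbabilityMeasure μ]
    (φ : Ω → Ω) (hmp : MeasurePreserving φ μ μ)
    (P : Lp ℝ 1 μ →L[ℝ] Lp ℝ 1 μ)
    (hP : ∀ (f : Lp ℝ 1 μ) (A : Set Ω), MeasurableSet A →
      ∫ x in A, (P f) x ∂μ = ∫ x in φ ⁻¹' A, f x ∂μ)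
    (h2 : ∀ f : Lp ℝ 1 μ, ∃ g : Lp ℝ 1 μ,
      Tendsto (fun n : ℕ => (P ^ n) f) atTop (𝓝 g))
    (B : Set Ω) (hB : ∀ n : ℕ, ∃ A : Set Ω, MeasurableSet A ∧ B = φ^[n] ⁻¹' A) :
        μ (B ∆ (φ ⁻¹' B)) = 0 := by
  have hBm : MeasurableSet B := by
    obtain ⟨A, hA, h⟩ := hB 0
    rw [h]; exact hA
  have hBm' : MeasurableSet (φ ⁻¹' B) := hmp.measurable hBm
  choose A hA hBA using hB
  have key : ∀ n, (P ^ n) (indicatorConstLp 1 hBm (measure_ne_top μ B) (1 : ℝ)) =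
      indicatorConstLp 1 (hA n) (measure_ne_top μ _) (1 : ℝ) := by
    intro n
    refine Lp.ext ?_
    refine Integrable.ae_eq_of_forall_setIntegral_eq _ _ (L1.integrable_coeFn _)
      (L1.integrable_coeFn _) ?_
    intro s hs _
    have hn := hmp.iterate n
    rw [aux_iter μ φ hmp P hP n _ s hs, setIntegral_indicatorConstLp (hn.measurable hs),
      setIntegral_indicatorConstLp hs]
    congr 1
    rw [measureReal_def, measureReal_def, ← hn.measure_preimage
      ((hA n).inter hs).nullMeasurableSet, preimage_inter, ← hBA]
  obtain ⟨g, hg⟩ := h2 (indicatorConstLp 1 hBm (measure_ne_top μ B) (1 : ℝ))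
  simp_rw [key] at hg
  have hd : ∀ n, dist (indicatorConstLp 1 (hA n) (measure_ne_top μ _) (1 : ℝ))
     (indicatorConstLp 1 (hA (n+1)) (measure_ne_top μ _) (1 : ℝ)) = μ.real (B ∆ (φ ⁻¹' B)) := by
    intro n
    rw [dist_indicatorConstLp_eq_norm, norm_indicatorConstLp one_ne_zero ENNReal.one_ne_top]
    have hn := hmp.iterate (n+1)
    simp only [norm_one, ENNReal.toReal_one, div_one, Real.rpow_one, one_mul]
    rw [measureReal_def, measureReal_def, ← hn.measure_preimage
      ((hA n).symmDiff (hA (n+1))).nullMeasurableSet]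
    have e2 : φ^[n+1] ⁻¹' (A n) = φ ⁻¹' B := by
      rw [Function.iterate_succ, preimage_comp, ← hBA]
    rw [preimage_symmDiff, ← hBA, e2, symmDiff_comm]
  have hz := hg.dist (hg.comp (tendsto_add_atTop_nat 1))
  simp only [Function.comp_apply, hd, dist_self] at hz
  have := tendsto_nhds_unique tendsto_const_nhds hz
  exact (measureReal_eq_zero_iff).1 this

theorem aux_31 {Ω : Type*} [m : MeasurableSpace Ω] (μ : Measure Ω) [IsProbabilityMeasure μ]
    (φ : Ω → Ω) (hmp : MeasurePreserving φ μ μ)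
    (hbi : ∀ A : Set Ω, MeasurableSet A → MeasurableSet (φ '' A))
   (h3 : ∀ B : Set Ω, (∀ n : ℕ, ∃ A : Set Ω, MeasurableSet A ∧ B = φ^[n] ⁻¹' A) →
        μ (B ∆ (φ ⁻¹' B)) = 0) (A : Set Ω) (hA : MeasurableSet A) :
    ∃ L : Set Ω, MeasurableSet L ∧
        Tendsto (fun n : ℕ => μ ((φ^[n] '' A) ∆ L)) atTop (𝓝 0) := by
  have him : ∀ n, MeasurableSet (φ^[n] '' A) := by
    intro n
    induction n with
    | zero => simpa using hA
    | succ n ih => rw [Function.iterate_succ', image_comp]; exact hbi _ ih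
  set D : ℕ → Set Ω := fun n => φ^[n] ⁻¹' (φ^[n] '' A) with hD
  have hDm : ∀ n, MeasurableSet (D n) := fun n => (hmp.iterate n).measurable (him n)
  have hmono : Monotone D := by
    refine monotone_nat_of_le_succ fun n x hx => ?_
    simp only [hD, mem_preimage, mem_image, Function.iterate_succ', Function.comp] at hx ⊢
    obtain ⟨a, ha, h⟩ := hx
    exact ⟨a, ha, by rw [h]⟩
  set L := ⋃ n, D n with hL
  have hLm : MeasurableSet L := MeasurableSet.iUnion hDm
  have hLinv : μ (L ∆ (φ ⁻¹' L)) = 0 := by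
    refine h3 L fun k => ⟨⋃ j, φ^[j] ⁻¹' (φ^[j + k] '' A),
      MeasurableSet.iUnion fun j => (hmp.iterate j).measurable (him _), ?_⟩
    rw [preimage_iUnion, hL, ← hmono.iUnion_nat_add k]
    refine iUnion_congr fun j => ?_
    rw [← preimage_comp, ← Function.iterate_add]
  have hinvn : ∀ n : ℕ, φ^[n] ⁻¹' L =ᵐ[μ] L := by
    intro n
    induction n with
    | zero => rfl
    | succ n ih =>
      rw [Function.iterate_succ, preimage_comp]
      exact (hmp.quasiMeasurePreserving.preimage_ae_eq ih).trans
        (measure_symmDiff_eq_zero_iff.1 hLinv).symm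
  refine ⟨L, hLm, ?_⟩
  have heq : ∀ n, μ ((φ^[n] '' A) ∆ L) = μ (L \ D n) := by
    intro n
    rw [← (hmp.iterate n).measure_preimage ((him n).symmDiff hLm).nullMeasurableSet,
      preimage_symmDiff, measure_congr (EventuallyEq.rfl.symmDiff (hinvn n))]
    rw [symmDiff_of_le (subset_iUnion D n)]
  simp_rw [heq]
  have h0 : ⋂ n, (L \ D n) = ∅ := by
    rw [← diff_iUnion, diff_self]
  have := tendsto_measure_iInter_atTop (μ := μ) (s := fun n => L \ D n)
    (fun n => (hLm.diff (hDm n)).nullMeasurableSet)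
    (fun a b hab => diff_subset_diff_right (hmono hab)) ⟨0, measure_ne_top _ _⟩
  rwa [h0, measure_empty] at this

theorem aux_13 {Ω : Type*} [m : MeasurableSpace Ω] (μ : Measure Ω) [IsProbabilityMeasure μ]
    (φ : Ω → Ω) (hmp : MeasurePreserving φ μ μ)
    (hbi : ∀ A : Set Ω, MeasurableSet A → MeasurableSet (φ '' A))
    (h1 : ∀ A : Set Ω, MeasurableSet A → ∃ L : Set Ω, MeasurableSet L ∧
        Tendsto (fun n : ℕ => μ ((φ^[n] '' A) ∆ L)) atTop (𝓝 0))
    (B : Set Ω) (hB : ∀ n : ℕ, ∃ A : Set Ω, MeasurableSet A ∧ B = φ^[n] ⁻¹' A) :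
        μ (B ∆ (φ ⁻¹' B)) = 0 := by
  have hBm : MeasurableSet B := by
    obtain ⟨A, hA, h⟩ := hB 0
    rw [h]; exact hA
  choose A hA hBA using hB
  obtain ⟨L, hL, hlim⟩ := h1 B hBm
  have him : ∀ n, MeasurableSet (φ^[n] '' B) := by
    intro n
    induction n with
    | zero => simpa using hBm
    | succ n ih => rw [Function.iterate_succ', image_comp]; exact hbi _ ih
  have hpre : ∀ n, φ^[n] ⁻¹' (φ^[n] '' B) = B := by
    intro n
    refine Subset.antisymm ?_ (subset_preimage_image _ _)
    rintro x ⟨b, hb, hbx⟩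
    rw [hBA n] at hb ⊢
    simpa [hbx] using hb
  have hd : ∀ n, μ ((φ^[n] '' B) ∆ (φ^[n+1] '' B)) = μ (B ∆ (φ ⁻¹' B)) := by
    intro n
    rw [← (hmp.iterate (n+1)).measure_preimage ((him n).symmDiff (him (n+1))).nullMeasurableSet,
      preimage_symmDiff, hpre (n+1)]
    have e2 : φ^[n+1] ⁻¹' (φ^[n] '' B) = φ ⁻¹' B := by
      rw [Function.iterate_succ, preimage_comp, hpre]
    rw [e2, symmDiff_comm]
  have hz := hlim.add (hlim.comp (tendsto_add_atTop_nat 1))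
  rw [add_zero] at hz
  refine le_antisymm (ge_of_tendsto' hz fun n => ?_) zero_le
  rw [← hd n]
  refine (measure_symmDiff_le _ L _).trans ?_
  rw [symmDiff_comm L]
  rfl

theorem stmt0 {Ω : Type*} [m : MeasurableSpace Ω] (μ : Measure Ω) [IsProbabilityMeasure μ]
    (φ : Ω → Ω) (hmp : MeasurePreserving φ μ μ)
    (hbi : ∀ A : Set Ω, MeasurableSet A → MeasurableSet (φ '' A))
    (P : Lp ℝ 1 μ →L[ℝ] Lp ℝ 1 μ)
    (hP : ∀ (f : Lp ℝ 1 μ) (A : Set Ω), MeasurableSet A →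
      ∫ x in A, (P f) x ∂μ = ∫ x in φ ⁻¹' A, f x ∂μ) :
    ((∀ A : Set Ω, MeasurableSet A → ∃ L : Set Ω, MeasurableSet L ∧
        Tendsto (fun n : ℕ => μ ((φ^[n] '' A) ∆ L)) atTop (𝓝 0)) ↔
      (∀ f : Lp ℝ 1 μ, ∃ g : Lp ℝ 1 μ, Tendsto (fun n : ℕ => (P ^ n) f) atTop (𝓝 g)))
    ∧ ((∀ f : Lp ℝ 1 μ, ∃ g : Lp ℝ 1 μ, Tendsto (fun n : ℕ => (P ^ n) f) atTop (𝓝 g)) ↔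
      (∀ B : Set Ω, (∀ n : ℕ, ∃ A : Set Ω, MeasurableSet A ∧ B = φ^[n] ⁻¹' A) →
        μ (B ∆ (φ ⁻¹' B)) = 0)) := by
  have h32 := aux_32 μ φ hmp P hP
  have h23 := aux_23 μ φ hmp P hP
  have h31 := aux_31 μ φ hmp hbi
  have h13 := aux_13 μ φ hmp hbi
  exact ⟨⟨fun h => h32 (h13 h), fun h => h31 (h23 h)⟩, ⟨h23, h32⟩⟩
end

section
/- Let (Ω,Σ,μ) be a probability space and φ : Ω → Ω a measure-preserving measurable transformation with Perron–Frobenius operator P on L¹(Ω,Σ,μ). Assume that every B ∈ Σ_∞ satisfies μ(B Δ φ⁻¹(B)) = 0. Then for every f ∈ L¹(Ω,Σ,μ) the sequence (Pⁿf) converges in L¹-norm to the conditional expectation E(f | Σ_inv). -/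
open MeasureTheory Filter Set Topology
open scoped symmDiff ENNReal

/-- The σ-algebra of `φ`-invariant measurable sets. -/
def invAlg {Ω : Type*} (m : MeasurableSpace Ω) (φ : Ω → Ω) : MeasurableSpace Ω where
  MeasurableSet' A := m.MeasurableSet' A ∧ φ ⁻¹' A = A
  measurableSet_empty := ⟨m.measurableSet_empty, rfl⟩
  measurableSet_compl A hA := ⟨m.measurableSet_compl A hA.1, by
    rw [Set.preimage_compl, hA.2]⟩
  measurableSet_iUnion s hs := ⟨m.measurableSet_iUnion s fun i => (hs i).1, by
    simp only [Set.preimage_iUnion]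
    exact Set.iUnion_congr fun i => (hs i).2⟩

lemma invAlg_le {Ω : Type*} (m : MeasurableSpace Ω) (φ : Ω → Ω) : invAlg m φ ≤ m :=
  fun _ hs => hs.1

lemma inv_of_measurable {Ω : Type*} (m : MeasurableSpace Ω) (φ : Ω → Ω) (g : Ω → ℝ)
    (hg : Measurable[invAlg m φ] g) (x : Ω) : g (φ x) = g x := by
  have h : MeasurableSet[invAlg m φ] (g ⁻¹' {g x}) := hg (measurableSet_singleton _)
  have h2 : x ∈ φ ⁻¹' (g ⁻¹' {g x}) := by rw [h.2]; rfl
  exact h2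

lemma comap_iter_le {Ω : Type*} [m : MeasurableSpace Ω] {φ : Ω → Ω} (hφ : Measurable φ) (n : ℕ) :
    m.comap (φ^[n]) ≤ m := (hφ.iterate n).comap_le

lemma comap_iter_anti {Ω : Type*} [m : MeasurableSpace Ω] {φ : Ω → Ω} (hφ : Measurable φ) :
    Antitone (fun n : ℕ => m.comap (φ^[n])) := by
  intro a b hab s hs
  obtain ⟨A, hA, rfl⟩ := hs
  obtain ⟨c, rfl⟩ := Nat.exists_eq_add_of_le' hab
  refine ⟨φ^[c] ⁻¹' A, (hφ.iterate c) hA, ?_⟩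
  rw [← Set.preimage_comp, ← Function.iterate_add]

lemma inv_iter {Ω : Type*} {φ : Ω → Ω} {A : Set Ω} (h : φ ⁻¹' A = A) (n : ℕ) :
    φ^[n] ⁻¹' A = A := by
  induction n with
  | zero => rfl
  | succ n ih => rw [Function.iterate_succ, Set.preimage_comp, ih, h]

lemma inv_le_comap {Ω : Type*} [m : MeasurableSpace Ω] {φ : Ω → Ω} (n : ℕ) :
    invAlg m φ ≤ m.comap (φ^[n]) := by
  intro s hs
  exact ⟨s, hs.1, inv_iter hs.2 n⟩

/-- A function measurable mod null sets w.r.t. every `φ⁻ⁿ Σ` is so w.r.t. the invariant algebra. -/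
lemma aesm_inv {Ω : Type*} [m : MeasurableSpace Ω] (μ : Measure Ω)
    (φ : Ω → Ω) (hmp : MeasurePreserving φ μ μ)
    (hinf : ∀ B : Set Ω, (∀ n : ℕ, ∃ A : Set Ω, MeasurableSet A ∧ B = φ^[n] ⁻¹' A) →
      μ (B ∆ (φ ⁻¹' B)) = 0)
    (h : Ω → ℝ) (hh : ∀ n : ℕ, AEStronglyMeasurable[m.comap (φ^[n])] h μ) :
    AEStronglyMeasurable[invAlg m φ] h μ := by
  choose g hg hgh using hh
  have hgm : ∀ n, Measurable[m.comap (φ^[n])] (g n) := fun n => (hg n).measurable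
  set h1 : Ω → ℝ := fun x => limsup (fun n => g n x) atTop with h1def
  have h1m : ∀ k, Measurable[m.comap (φ^[k])] h1 := by
    intro k
    have : h1 = fun x => limsup (fun n => g (n + k) x) atTop := by
      funext x
      exact (limsup_nat_add (fun n => g n x) k).symm
    rw [this]
    refine Measurable.limsup (mδ := m.comap (φ^[k])) fun i => ?_
    exact (hgm (i + k)).mono (comap_iter_anti hmp.measurable (Nat.le_add_left k i)) le_rfl
  have hh1 : h =ᵐ[μ] h1 := by
    filter_upwards [ae_all_iff.2 hgh] with x hx
    simp only [h1def]
    simp only [← hx]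
    exact limsup_const _ |>.symm
  have h1mm : Measurable h1 := (h1m 0).mono (comap_iter_le hmp.measurable 0) le_rfl
  have hinv : h1 ∘ φ =ᵐ[μ] h1 := by
    have : ∀ q : ℚ, ∀ᵐ x ∂μ, (h1 (φ x) < q ↔ h1 x < q) := by
      intro q
      have h0 := hinf (h1 ⁻¹' Iio (q : ℝ)) (fun n => by
        obtain ⟨A, hA, hA2⟩ := h1m n (measurableSet_Iio (a := (q : ℝ)))
        exact ⟨A, hA, hA2.symm⟩)
      rw [measure_symmDiff_eq_zero_iff] at h0
      filter_upwards [h0.mem_iff] with x hx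
      exact hx.symm
    filter_upwards [ae_all_iff.2 this] with x hx
    apply le_antisymm
    · by_contra! hc
      obtain ⟨q, hq1, hq2⟩ := exists_rat_btwn hc
      exact absurd ((hx q).2 hq1) (not_lt.2 hq2.le)
    · by_contra! hc
      obtain ⟨q, hq1, hq2⟩ := exists_rat_btwn hc
      exact absurd ((hx q).1 hq1) (not_lt.2 hq2.le)
  have hinvn : ∀ n : ℕ, h1 ∘ φ^[n] =ᵐ[μ] h1 := by
    intro n
    induction n with
    | zero => rfl
    | succ n ih =>
      rw [Function.iterate_succ, ← Function.comp_assoc]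
      exact (hmp.quasiMeasurePreserving.ae_eq_comp ih).trans hinv
  refine ⟨fun x => limsup (fun n => h1 (φ^[n] x)) atTop, ?_, ?_⟩
  · refine Measurable.stronglyMeasurable (mα := invAlg m φ) ?_
    intro s hs
    refine ⟨(Measurable.limsup fun n => h1mm.comp (hmp.measurable.iterate n)) hs, ?_⟩
    ext x
    simp only [mem_preimage]
    have := limsup_nat_add (fun n => h1 (φ^[n] x)) 1
    simp only [Function.iterate_succ, Function.comp] at this
    rw [this]
  · refine hh1.trans ?_
    filter_upwards [ae_all_iff.2 hinvn] with x hx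
    simp only [Function.comp] at hx
    simp only [hx]
    exact limsup_const _ |>.symm

lemma conv_L2 {Ω : Type*} [m : MeasurableSpace Ω] (μ : Measure Ω) [IsProbabilityMeasure μ]
    (φ : Ω → Ω) (hmp : MeasurePreserving φ μ μ)
    (hinf : ∀ B : Set Ω, (∀ n : ℕ, ∃ A : Set Ω, MeasurableSet A ∧ B = φ^[n] ⁻¹' A) →
      μ (B ∆ (φ ⁻¹' B)) = 0)
    (f : Ω → ℝ) (hf : MemLp f 2 μ) :
    Tendsto (fun n : ℕ => eLpNorm (μ[f|m.comap (φ^[n])] - μ[f|invAlg m φ]) 1 μ)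
      atTop (𝓝 0) := by
  have hle := fun n => comap_iter_le hmp.measurable (φ := φ) n
  haveI hF : ∀ n, Fact (m.comap (φ^[n]) ≤ m) := fun n => ⟨hle n⟩
  set F : Lp ℝ 2 μ := hf.toLp f with hFdef
  let K : ℕ → Submodule ℝ (Lp ℝ 2 μ) := fun n => lpMeas ℝ ℝ (m.comap (φ^[n])) 2 μ
  haveI hKo : ∀ n, (K n).HasOrthogonalProjection := fun n => by
    dsimp only [K]; infer_instance
  have hKanti : Antitone K := by
    intro a b hab u hu
    have hu' : AEStronglyMeasurable[m.comap (φ^[b])] u μ :=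
      mem_lpMeas_iff_aestronglyMeasurable.1 hu
    exact mem_lpMeas_iff_aestronglyMeasurable.2 (hu'.mono (comap_iter_anti hmp.measurable hab))
  have hT : ∀ n, ((K n).starProjection F : Ω → ℝ) =ᵐ[μ] μ[f|m.comap (φ^[n])] :=
    fun n => hf.condExpL2_ae_eq_condExp (𝕜 := ℝ) (hle n)
  obtain ⟨h, hh⟩ : ∃ h : Lp ℝ 2 μ, Tendsto (fun n => (K n).starProjection F) atTop (𝓝 h) := by
    have h1 := Submodule.starProjection_tendsto_closure_iSup (fun n => (K n)ᗮ)
      (fun a b hab => Submodule.orthogonal_le (hKanti hab)) F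
    refine ⟨_, ((tendsto_const_nhds (x := F)).sub h1).congr fun n => ?_⟩
    simp [Submodule.starProjection_orthogonal']
  have hhK : ∀ n, h ∈ K n := by
    intro n
    have hc : IsClosed (K n : Set (Lp ℝ 2 μ)) := by
      rw [← Submodule.orthogonal_orthogonal (K n)]
      exact Submodule.isClosed_orthogonal _
    refine hc.mem_of_tendsto hh ?_
    filter_upwards [eventually_ge_atTop n] with k hk
    exact hKanti hk (Submodule.starProjection_apply_mem _ _)
  have hconv : Tendsto (fun n : ℕ => eLpNorm (μ[f|m.comap (φ^[n])] - (h : Ω → ℝ)) 1 μ)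
      atTop (𝓝 0) := by
    have h2 := (Lp.tendsto_Lp_iff_tendsto_eLpNorm' _ _).1 hh
    refine tendsto_of_tendsto_of_tendsto_of_le_of_le tendsto_const_nhds h2 (fun _ => zero_le)
      fun n => ?_
    have e : μ[f|m.comap (φ^[n])] - (h : Ω → ℝ) =ᵐ[μ] ((K n).starProjection F : Ω → ℝ) - h :=
      (hT n).symm.sub (ae_eq_refl _)
    rw [eLpNorm_congr_ae e]
    exact eLpNorm_le_eLpNorm_of_exponent_le one_le_two
      ((Lp.aestronglyMeasurable _).sub (Lp.aestronglyMeasurable _))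
  have hfi : Integrable f μ := hf.integrable one_le_two
  have hhi : Integrable (h : Ω → ℝ) μ := (Lp.memLp h).integrable one_le_two
  have hE : (h : Ω → ℝ) =ᵐ[μ] μ[f|invAlg m φ] := by
    refine ae_eq_condExp_of_forall_setIntegral_eq (invAlg_le m φ) hfi
      (fun s _ _ => hhi.integrableOn) (fun s hs _ => ?_) ?_
    · have t1 : Tendsto (fun n : ℕ => ∫ x in s, (μ[f|m.comap (φ^[n])]) x ∂μ) atTop
          (𝓝 (∫ x in s, h x ∂μ)) :=
        tendsto_setIntegral_of_L1' _ hhi.aestronglyMeasurable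
          (Eventually.of_forall fun n => integrable_condExp) hconv s
      refine tendsto_nhds_unique t1 (tendsto_const_nhds.congr fun n => ?_)
      exact (setIntegral_condExp (hle n) hfi (inv_le_comap n s hs)).symm
    · exact aesm_inv μ φ hmp hinf h fun n => mem_lpMeas_iff_aestronglyMeasurable.1 (hhK n)
  refine hconv.congr fun n => eLpNorm_congr_ae ((ae_eq_refl _).sub hE)

lemma conv_L1 {Ω : Type*} [m : MeasurableSpace Ω] (μ : Measure Ω) [IsProbabilityMeasure μ]
    (φ : Ω → Ω) (hmp : MeasurePreserving φ μ μ)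
    (hinf : ∀ B : Set Ω, (∀ n : ℕ, ∃ A : Set Ω, MeasurableSet A ∧ B = φ^[n] ⁻¹' A) →
      μ (B ∆ (φ ⁻¹' B)) = 0)
    (f : Ω → ℝ) (hf : Integrable f μ) :
    Tendsto (fun n : ℕ => eLpNorm (μ[f|m.comap (φ^[n])] - μ[f|invAlg m φ]) 1 μ)
      atTop (𝓝 0) := by
  rw [ENNReal.tendsto_nhds_zero]
  intro ε hε
  have hε3 : ε / 3 ≠ 0 := (ENNReal.div_pos hε.ne' (by simp)).ne'
  obtain ⟨g, hg, -⟩ := (memLp_one_iff_integrable.2 hf).exists_simpleFunc_eLpNorm_sub_lt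
    (by simp) hε3
  have hgi : Integrable (g : Ω → ℝ) μ := g.integrable_of_isFiniteMeasure
  have hg2 : MemLp (g : Ω → ℝ) 2 μ := g.memLp_of_isFiniteMeasure 2 μ
  have hev := (ENNReal.tendsto_nhds_zero.1 (conv_L2 μ φ hmp hinf g hg2)) (ε / 3)
    (pos_iff_ne_zero.2 hε3)
  have key : ∀ m' : MeasurableSpace Ω, eLpNorm (μ[f|m'] - μ[(g : Ω → ℝ)|m']) 1 μ ≤ ε / 3 := by
    intro m'
    rw [← eLpNorm_congr_ae (condExp_sub hf hgi m')]
    exact (eLpNorm_one_condExp_le_eLpNorm _).trans hg.le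
  filter_upwards [hev] with n hn
  have hm : ∀ (u : Ω → ℝ) (m' : MeasurableSpace Ω), AEStronglyMeasurable[m] (μ[u|m']) μ :=
    fun u m' => integrable_condExp.aestronglyMeasurable
  calc _ = eLpNorm ((μ[f|m.comap (φ^[n])] - μ[(g : Ω → ℝ)|m.comap (φ^[n])])
        + (μ[(g : Ω → ℝ)|m.comap (φ^[n])] - μ[(g : Ω → ℝ)|invAlg m φ])
        + (μ[(g : Ω → ℝ)|invAlg m φ] - μ[f|invAlg m φ])) 1 μ := by congr 1; abel
    _ ≤ _ + _ := eLpNorm_add_le (((hm _ _).sub (hm _ _)).add ((hm _ _).sub (hm _ _)))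
        ((hm _ _).sub (hm _ _)) le_rfl
    _ ≤ (_ + _) + _ := by
        gcongr
        exact eLpNorm_add_le ((hm _ _).sub (hm _ _)) ((hm _ _).sub (hm _ _)) le_rfl
    _ ≤ (ε / 3 + ε / 3) + ε / 3 := by
        gcongr
        · exact key _
        · rw [eLpNorm_sub_comm]
          exact key _
    _ = ε := ENNReal.add_thirds ε

theorem stmt1 {Ω : Type*} [m : MeasurableSpace Ω] (μ : Measure Ω) [IsProbabilityMeasure μ]
    (φ : Ω → Ω) (hmp : MeasurePreserving φ μ μ)
    (P : Lp ℝ 1 μ →L[ℝ] Lp ℝ 1 μ)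
    (hP : ∀ (f : Lp ℝ 1 μ) (A : Set Ω), MeasurableSet A →
      ∫ x in A, (P f) x ∂μ = ∫ x in φ ⁻¹' A, f x ∂μ)
    (hinf : ∀ B : Set Ω, (∀ n : ℕ, ∃ A : Set Ω, MeasurableSet A ∧ B = φ^[n] ⁻¹' A) →
      μ (B ∆ (φ ⁻¹' B)) = 0)
    (f : Lp ℝ 1 μ) :
    Tendsto (fun n : ℕ => eLpNorm (((P ^ n) f : Ω → ℝ) - μ[(f : Ω → ℝ)|invAlg m φ]) 1 μ)
      atTop (𝓝 0) := by
  have hit : ∀ n : ℕ, ∀ A : Set Ω, MeasurableSet A →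
      ∫ x in A, ((P ^ n) f) x ∂μ = ∫ x in φ^[n] ⁻¹' A, f x ∂μ := by
    intro n
    induction n with
    | zero => intro A _; simp
    | succ n ih =>
      intro A hA
      rw [pow_succ', ContinuousLinearMap.mul_apply, hP _ A hA, ih _ (hmp.measurable hA),
        Function.iterate_succ', Set.preimage_comp]
  have hfi : Integrable (f : Ω → ℝ) μ := L1.integrable_coeFn f
  refine (conv_L1 μ φ hmp hinf f hfi).congr fun n => ?_
  have hn := hmp.iterate n
  have hPm : StronglyMeasurable ((P ^ n) f : Ω → ℝ) := Lp.stronglyMeasurable _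
  have h1 : ((P ^ n) f : Ω → ℝ) ∘ φ^[n] =ᵐ[μ] μ[(f : Ω → ℝ)|m.comap (φ^[n])] := by
    refine ae_eq_condExp_of_forall_setIntegral_eq (comap_iter_le hmp.measurable n) hfi
      (fun s _ _ => ?_) (fun s hs _ => ?_) ?_
    · exact ((hn.integrable_comp hPm.aestronglyMeasurable).2
        (L1.integrable_coeFn _)).integrableOn
    · obtain ⟨A, hA, rfl⟩ := hs
      rw [← hit n A hA]
      have := setIntegral_map (μ := μ) (g := φ^[n]) (f := ((P ^ n) f : Ω → ℝ)) hA
        hPm.aestronglyMeasurable hn.aemeasurable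
      rw [hn.map_eq] at this
      exact this.symm
    · exact (hPm.comp_measurable (comap_measurable _)).aestronglyMeasurable
  have h2 : (μ[(f : Ω → ℝ)|invAlg m φ]) ∘ φ^[n] = μ[(f : Ω → ℝ)|invAlg m φ] := by
    have h3 := inv_of_measurable m φ (μ[(f : Ω → ℝ)|invAlg m φ])
      stronglyMeasurable_condExp.measurable
    funext x
    have : ∀ n : ℕ, (μ[(f : Ω → ℝ)|invAlg m φ]) (φ^[n] x) = (μ[(f : Ω → ℝ)|invAlg m φ]) x := by
      intro n
      induction n with
      | zero => rfl
      | succ n ih => rw [Function.iterate_succ_apply', h3, ih]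
    exact this n
  rw [← eLpNorm_comp_measurePreserving
    (hPm.aestronglyMeasurable.sub integrable_condExp.aestronglyMeasurable) hn]
  refine eLpNorm_congr_ae ?_
  filter_upwards [h1] with x hx
  have h2x := congrFun h2 x
  simp only [Function.comp, Pi.sub_apply] at *
  rw [hx, h2x]
end

section
/- Let (Ω,Σ,μ) be a probability space and φ : Ω → Ω a bimeasurable measure-preserving transformation with Perron–Frobenius operator P on L¹(Ω,Σ,μ). If the sequence (Pⁿf) converges in L¹-norm for every f ∈ L¹(Ω,Σ,μ), then for every A ∈ Σ the sequence of images (φⁿ(A)) converges in the measure algebra to U := ⋃_{n≥0} φⁿ(A); that is, μ(φⁿ(A) Δ U) → 0 as n → ∞. (The set U coincides up to a μ-null set with the minimal invariant superset A* of A.) -/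
open MeasureTheory Filter Set Topology
open scoped symmDiff ENNReal

theorem aux_pow {Ω : Type*} [m : MeasurableSpace Ω] (μ : Measure Ω)
    (φ : Ω → Ω) (hmp : MeasurePreserving φ μ μ)
    (P : Lp ℝ 1 μ →L[ℝ] Lp ℝ 1 μ)
    (hP : ∀ (f : Lp ℝ 1 μ) (A : Set Ω), MeasurableSet A →
      ∫ x in A, (P f) x ∂μ = ∫ x in φ ⁻¹' A, f x ∂μ) (f : Lp ℝ 1 μ) (n : ℕ) :
    ∀ E : Set Ω, MeasurableSet E →
      ∫ x in E, ((P ^ n) f) x ∂μ = ∫ x in φ^[n] ⁻¹' E, f x ∂μ := by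
  induction n with
  | zero => intro E hE; simp
  | succ n ih =>
    intro E hE
    have h1 : (P ^ (n+1)) f = P ((P ^ n) f) := by rw [pow_succ']; rfl
    rw [h1, hP _ E hE, ih _ (hmp.measurable hE), ← preimage_comp, Function.iterate_succ']

theorem aux_img {Ω : Type*} [m : MeasurableSpace Ω] (φ : Ω → Ω)
    (hbi : ∀ A : Set Ω, MeasurableSet A → MeasurableSet (φ '' A)) (A : Set Ω)
    (hA : MeasurableSet A) (n : ℕ) : MeasurableSet (φ^[n] '' A) := by
  induction n with
  | zero => simpa using hA
  | succ n ih => rw [Function.iterate_succ', image_comp]; exact hbi _ ih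

theorem aux_main {Ω : Type*} [m : MeasurableSpace Ω] (μ : Measure Ω) [IsProbabilityMeasure μ]
    (φ : Ω → Ω) (hmp : MeasurePreserving φ μ μ)
    (hbi : ∀ A : Set Ω, MeasurableSet A → MeasurableSet (φ '' A))
    (P : Lp ℝ 1 μ →L[ℝ] Lp ℝ 1 μ)
    (hP : ∀ (f : Lp ℝ 1 μ) (A : Set Ω), MeasurableSet A →
      ∫ x in A, (P f) x ∂μ = ∫ x in φ ⁻¹' A, f x ∂μ)
    (hconv : ∀ f : Lp ℝ 1 μ, ∃ g : Lp ℝ 1 μ, Tendsto (fun n : ℕ => (P ^ n) f) atTop (𝓝 g))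
    (B : Set Ω) (hB : MeasurableSet B) :
    Tendsto (fun n : ℕ => μ (B \ φ^[n] '' B)) atTop (𝓝 0) := by
  set f : Lp ℝ 1 μ := indicatorConstLp 1 hB (measure_ne_top μ B) (1 : ℝ) with hf
  obtain ⟨g, hg⟩ := hconv f
  have hgi : Integrable g μ := L1.integrable_coeFn g
  have hgm : Measurable g := (Lp.stronglyMeasurable g).measurable
  have hPn : ∀ (n : ℕ) (E : Set Ω), MeasurableSet E →
      ∫ x in E, ((P ^ n) f) x ∂μ = μ.real (B ∩ φ^[n] ⁻¹' E) := by
    intro n E hE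
    rw [aux_pow μ φ hmp P hP f n E hE, hf,
      setIntegral_indicatorConstLp ((hmp.measurable.iterate n) hE)]
    simp
  have hbound : ∀ (n : ℕ) (E : Set Ω),
      |∫ x in E, ((P ^ n) f) x ∂μ - ∫ x in E, g x ∂μ| ≤ ‖(P ^ n) f - g‖ := by
    intro n E
    rw [← integral_sub (L1.integrable_coeFn _).integrableOn hgi.integrableOn, L1.norm_eq_integral_norm]
    have h1 : ∫ x, ‖((P ^ n) f - g : Lp ℝ 1 μ) x‖ ∂μ = ∫ x, ‖((P ^ n) f) x - g x‖ ∂μ := by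
      apply integral_congr_ae
      filter_upwards [Lp.coeFn_sub ((P ^ n) f) g] with x hx
      rw [hx]; rfl
    rw [h1, ← Real.norm_eq_abs]
    refine (norm_integral_le_integral_norm _).trans ?_
    exact setIntegral_le_integral ((L1.integrable_coeFn _).sub hgi).norm
      (Eventually.of_forall fun x => norm_nonneg _)
  have hnorm : Tendsto (fun n : ℕ => ‖(P ^ n) f - g‖) atTop (𝓝 0) :=
    tendsto_iff_norm_sub_tendsto_zero.1 hg
  have hlim : ∀ E : Set Ω, MeasurableSet E →
      Tendsto (fun n : ℕ => μ.real (B ∩ φ^[n] ⁻¹' E)) atTop (𝓝 (∫ x in E, g x ∂μ)) := by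
    intro E hE
    rw [tendsto_iff_norm_sub_tendsto_zero]
    refine squeeze_zero (fun _ => norm_nonneg _) (fun n => ?_) hnorm
    rw [← hPn n E hE]
    exact hbound n E
  have hg0 : 0 ≤ᵐ[μ] g := by
    apply ae_nonneg_of_forall_setIntegral_nonneg hgi
    intro E hE _
    exact ge_of_tendsto' (hlim E hE) fun n => measureReal_nonneg
  set Z : Set Ω := {x | g x ≤ 0} with hZ
  have hZm : MeasurableSet Z := measurableSet_le hgm measurable_const
  have hZ0 : ∫ x in Z, g x ∂μ = 0 := by
    apply le_antisymm
    · exact setIntegral_nonpos hZm fun x hx => hx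
    · exact setIntegral_nonneg_of_ae hg0
  have hZ1 : ∫ x in φ ⁻¹' Z, g x ∂μ = 0 := by
    have h1 := hlim (φ ⁻¹' Z) (hmp.measurable hZm)
    have h2 := (hlim Z hZm).comp (tendsto_add_atTop_nat 1)
    rw [hZ0] at h2
    refine tendsto_nhds_unique h1 (h2.congr fun n => ?_)
    simp only [Function.comp]
    rw [← preimage_comp, Function.iterate_succ']
  have hsub : φ ⁻¹' Z ≤ᵐ[μ] Z := by
    have h3 := (setIntegral_eq_zero_iff_of_nonneg_ae (ae_restrict_of_ae hg0) hgi.integrableOn).1 hZ1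
    have h4 := (ae_restrict_iff' (hmp.measurable hZm)).1 h3
    filter_upwards [h4] with x hx hxz
    exact (hx hxz).le
  have heq : φ ⁻¹' Z =ᵐ[μ] Z :=
    ae_eq_of_ae_subset_of_measure_ge hsub (hmp.measure_preimage hZm.nullMeasurableSet).ge
      (hmp.measurable hZm).nullMeasurableSet (measure_ne_top _ _)
  have heqn : ∀ n, φ^[n] ⁻¹' Z =ᵐ[μ] Z := by
    intro n
    induction n with
    | zero => exact ae_eq_refl _
    | succ n ih =>
      rw [Function.iterate_succ, preimage_comp]
      exact (hmp.quasiMeasurePreserving.preimage_ae_eq ih).trans heq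
  have hBZ : μ (B ∩ Z) = 0 := by
    have h1 := hlim Z hZm
    have h2 : ∀ n, μ.real (B ∩ φ^[n] ⁻¹' Z) = μ.real (B ∩ Z) := fun n =>
      measureReal_congr ((ae_eq_refl B).inter (heqn n))
    simp only [h2, hZ0] at h1
    have h3 := tendsto_nhds_unique h1 tendsto_const_nhds
    exact (measureReal_eq_zero_iff).1 h3.symm
  -- convergence
  have hD : ∀ n, MeasurableSet (B \ φ^[n] '' B) := fun n => hB.diff (aux_img φ hbi B hB n)
  have hint : Tendsto (fun n : ℕ => ∫ x in B \ φ^[n] '' B, g x ∂μ) atTop (𝓝 0) := by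
    refine squeeze_zero_norm (fun n => ?_) hnorm
    have h1 := hbound n (B \ φ^[n] '' B)
    rw [hPn n _ (hD n)] at h1
    have h2 : B ∩ φ^[n] ⁻¹' (B \ φ^[n] '' B) = ∅ := by
      ext x
      simp only [mem_inter_iff, mem_preimage, mem_diff, mem_empty_iff_false, iff_false]
      rintro ⟨hx, _, h⟩
      exact h (mem_image_of_mem _ hx)
    rw [h2] at h1
    simpa using h1
  let G : Ω → ℝ≥0∞ := fun x => ENNReal.ofReal (g x)
  have hGm : Measurable G := hgm.ennreal_ofReal
  let ν := (μ.restrict B).withDensity G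
  have hν : ν.withDensity G⁻¹ = μ.restrict B := by
    apply withDensity_inv_same hGm
    · rw [ae_restrict_iff' hB]
      have : ∀ᵐ x ∂μ, x ∉ B ∩ Z := measure_eq_zero_iff_ae_notMem.1 hBZ
      filter_upwards [this] with x hx hxB
      simp only [G, ne_eq, ENNReal.ofReal_eq_zero]
      exact fun h => hx ⟨hxB, h⟩
    · exact Eventually.of_forall fun x => ENNReal.ofReal_ne_top
  have hνD : Tendsto (fun n => ν (B \ φ^[n] '' B)) atTop (𝓝 0) := by
    have h1 := ENNReal.tendsto_ofReal hint
    rw [ENNReal.ofReal_zero] at h1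
    refine h1.congr fun n => ?_
    rw [withDensity_apply _ (hD n), Measure.restrict_restrict (hD n),
      inter_eq_self_of_subset_left diff_subset]
    exact ofReal_integral_eq_lintegral_ofReal hgi.integrableOn (ae_restrict_of_ae hg0)
  have key : ∀ n, ∫⁻ x in B \ φ^[n] '' B, G⁻¹ x ∂ν = μ (B \ φ^[n] '' B) := by
    intro n
    rw [← withDensity_apply _ (hD n), hν, Measure.restrict_apply (hD n),
      inter_eq_self_of_subset_left diff_subset]
  have hfin : ∫⁻ x, G⁻¹ x ∂ν ≠ ∞ := by
    rw [← setLIntegral_univ, ← withDensity_apply _ MeasurableSet.univ, hν]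
    exact measure_ne_top _ _
  exact (tendsto_setLIntegral_zero hfin hνD).congr key

theorem stmt2 {Ω : Type*} [m : MeasurableSpace Ω] (μ : Measure Ω) [IsProbabilityMeasure μ]
    (φ : Ω → Ω) (hmp : MeasurePreserving φ μ μ)
    (hbi : ∀ A : Set Ω, MeasurableSet A → MeasurableSet (φ '' A))
    (P : Lp ℝ 1 μ →L[ℝ] Lp ℝ 1 μ)
    (hP : ∀ (f : Lp ℝ 1 μ) (A : Set Ω), MeasurableSet A →
      ∫ x in A, (P f) x ∂μ = ∫ x in φ ⁻¹' A, f x ∂μ)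
    (hconv : ∀ f : Lp ℝ 1 μ, ∃ g : Lp ℝ 1 μ, Tendsto (fun n : ℕ => (P ^ n) f) atTop (𝓝 g))
    (A : Set Ω) (hA : MeasurableSet A) :
    Tendsto (fun n : ℕ => μ ((φ^[n] '' A) ∆ (⋃ k : ℕ, φ^[k] '' A))) atTop (𝓝 0)
    ∧ μ ((⋃ k : ℕ, φ^[k] '' A) ∆ (⋂₀ {B : Set Ω | A ⊆ B ∧ φ ⁻¹' B = B})) = 0 := by
  have him := aux_img φ hbi A hA
  set U : Set Ω := ⋃ k : ℕ, φ^[k] '' A with hU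
  have hUm : MeasurableSet U := MeasurableSet.iUnion him
  constructor
  · have hk : ∀ k, Tendsto (fun n : ℕ => μ (φ^[k] '' A \ φ^[n] '' A)) atTop (𝓝 0) := by
      intro k
      have h := aux_main μ φ hmp hbi P hP hconv _ (him k)
      rw [← tendsto_add_atTop_iff_nat k]
      refine h.congr fun n => ?_
      rw [← image_comp, ← Function.iterate_add]
    let V : ℕ → Set Ω := fun j => U \ ⋃ k ∈ Finset.range j, φ^[k] '' A
    have hV : Tendsto (fun j => μ (V j)) atTop (𝓝 0) := by
      have hVe : ⋂ j, V j = ∅ := by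
        ext x
        simp only [V, mem_iInter, mem_diff, mem_empty_iff_false, iff_false]
        intro h
        obtain ⟨k, hk⟩ := mem_iUnion.1 (h 0).1
        exact (h (k+1)).2 (mem_biUnion (by simp) hk)
      have := tendsto_measure_iInter_atTop (μ := μ) (s := V)
        (fun j => (hUm.diff (Finset.measurableSet_biUnion _ fun k _ => him k)).nullMeasurableSet)
        (fun i j hij => diff_subset_diff_right
          (biUnion_subset_biUnion_left (by
            intro k hk
            have hk' : k ∈ Finset.range i := hk
            exact Finset.mem_range.2 ((Finset.mem_range.1 hk').trans_le hij))))
        ⟨0, measure_ne_top _ _⟩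
      rw [hVe, measure_empty] at this
      exact this
    rw [ENNReal.tendsto_nhds_zero]
    intro ε hε
    have hε2 : 0 < ε / 2 := ENNReal.half_pos hε.ne'
    obtain ⟨j, hj⟩ := ((ENNReal.tendsto_nhds_zero.1 hV) _ hε2).exists
    have hs : Tendsto (fun n => ∑ k ∈ Finset.range j, μ (φ^[k] '' A \ φ^[n] '' A)) atTop (𝓝 0) := by
      have := tendsto_finsetSum (Finset.range j) fun k _ => hk k
      simpa using this
    filter_upwards [(ENNReal.tendsto_nhds_zero.1 hs) _ hε2] with n hn
    have hsub : (φ^[n] '' A) ∆ U ⊆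
        V j ∪ ⋃ k ∈ Finset.range j, (φ^[k] '' A \ φ^[n] '' A) := by
      intro x hx
      rcases hx with ⟨h1, h2⟩ | ⟨h1, h2⟩
      · exact absurd (mem_iUnion.2 ⟨n, h1⟩) h2
      · by_cases h : x ∈ ⋃ k ∈ Finset.range j, φ^[k] '' A
        · right
          simp only [mem_iUnion] at h ⊢
          obtain ⟨k, hk, hx⟩ := h
          exact ⟨k, hk, hx, h2⟩
        · exact Or.inl ⟨h1, h⟩
    calc _ ≤ _ := measure_mono hsub
      _ ≤ _ := measure_union_le _ _
      _ ≤ ε / 2 + ε / 2 := add_le_add hj ((measure_biUnion_finset_le _ _).trans hn)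
      _ = ε := ENNReal.add_halves ε
  · have hUsub : ∀ n, U ⊆ φ^[n] ⁻¹' U := by
      intro n x hx
      obtain ⟨k, y, hy, rfl⟩ := mem_iUnion.1 hx
      refine mem_iUnion.2 ⟨n + k, y, hy, ?_⟩
      rw [Function.iterate_add]; rfl
    have hn : ∀ n, μ (φ^[n] ⁻¹' U \ U) = 0 := by
      intro n
      rw [measure_diff (hUsub n) hUm.nullMeasurableSet (measure_ne_top _ _),
        (hmp.iterate n).measure_preimage hUm.nullMeasurableSet, tsub_self]
    refine measure_mono_null ?_ (measure_iUnion_null hn)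
    rintro x (⟨h1, h2⟩ | ⟨h1, h2⟩)
    · exfalso
      apply h2
      rintro B ⟨hAB, hB⟩
      obtain ⟨k, y, hy, rfl⟩ := mem_iUnion.1 h1
      have : ∀ k, φ^[k] y ∈ B := by
        intro k
        induction k with
        | zero => exact hAB hy
        | succ k ih =>
          rw [Function.iterate_succ_apply']
          rw [← hB] at ih
          exact ih
      exact this k
    · have hW := h1 (⋃ n, φ^[n] ⁻¹' U) ⟨?_, ?_⟩
      · obtain ⟨n, hx⟩ := mem_iUnion.1 hW
        exact mem_iUnion.2 ⟨n, hx, h2⟩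
      · intro y hy
        exact mem_iUnion.2 ⟨0, mem_iUnion.2 ⟨0, y, hy, rfl⟩⟩
      · ext y
        simp only [mem_preimage, mem_iUnion]
        constructor
        · rintro ⟨n, h⟩
          exact ⟨n + 1, h⟩
        · rintro ⟨n, h⟩
          refine ⟨n, ?_⟩
          have := hUsub 1 h
          rw [← Function.iterate_succ_apply, Function.iterate_succ_apply']
          exact this
end

section
/- Let (Ω,Σ,μ) be a probability space and φ : Ω → Ω a bimeasurable measure-preserving transformation. If for every A ∈ Σ there exists a measurable set L with μ(φⁿ(A) Δ L) → 0 as n → ∞, then every B ∈ Σ_∞ satisfies μ(B Δ φ⁻¹(B)) = 0 (i.e., Σ_∞ is contained in the completion of Σ_inv within Σ). -/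
open MeasureTheory Filter Set Topology
open scoped symmDiff ENNReal

theorem stmt3 {Ω : Type*} [m : MeasurableSpace Ω] (μ : Measure Ω) [IsProbabilityMeasure μ]
    (φ : Ω → Ω) (hmp : MeasurePreserving φ μ μ)
    (hbi : ∀ A : Set Ω, MeasurableSet A → MeasurableSet (φ '' A))
    (hconv : ∀ A : Set Ω, MeasurableSet A → ∃ L : Set Ω, MeasurableSet L ∧
      Tendsto (fun n : ℕ => μ ((φ^[n] '' A) ∆ L)) atTop (𝓝 0))
    (B : Set Ω) (hB : ∀ n : ℕ, ∃ A : Set Ω, MeasurableSet A ∧ B = φ^[n] ⁻¹' A) :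
    μ (B ∆ (φ ⁻¹' B)) = 0 := by
  have hBm : MeasurableSet B := by
    obtain ⟨A, hA, h⟩ := hB 0
    rw [h]; simpa using hA
  have hm : ∀ n : ℕ, MeasurableSet (φ^[n] '' B) := by
    intro n
    induction n with
    | zero => simpa using hBm
    | succ k ih =>
      rw [Function.iterate_succ', image_comp]
      exact hbi _ ih
  have hpre : ∀ n : ℕ, φ^[n] ⁻¹' (φ^[n] '' B) = B := by
    intro n
    obtain ⟨A, hA, h⟩ := hB n
    apply Subset.antisymm _ (subset_preimage_image _ _)
    rintro x ⟨y, hy, hxy⟩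
    rw [h] at hy ⊢
    simp only [mem_preimage] at hy ⊢
    rwa [← hxy]
  obtain ⟨L, hL, hlim⟩ := hconv B hBm
  have key : ∀ n : ℕ, μ (B ∆ (φ ⁻¹' B)) ≤
      μ ((φ^[n + 1] '' B) ∆ L) + μ ((φ^[n] '' B) ∆ L) := by
    intro n
    have h1 : B ∆ (φ ⁻¹' B) = φ^[n + 1] ⁻¹' ((φ^[n + 1] '' B) ∆ (φ^[n] '' B)) := by
      have h2 : φ^[n + 1] ⁻¹' (φ^[n] '' B) = φ ⁻¹' B := by
        rw [Function.iterate_succ, preimage_comp, hpre n]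
      rw [preimage_symmDiff, hpre (n + 1), h2]
    rw [h1, (hmp.iterate (n + 1)).measure_preimage
      ((hm (n + 1)).symmDiff (hm n)).nullMeasurableSet, symmDiff_comm (φ^[n] '' B) L]
    exact measure_symmDiff_le _ _ _
  have hl2 := ((tendsto_add_atTop_iff_nat 1).2 hlim).add hlim
  rw [add_zero] at hl2
  exact le_antisymm (ge_of_tendsto' hl2 key) zero_le
end

section
/- Let (Ω,Σ,μ) be a probability space and φ : Ω → Ω a measure-preserving measurable transformation with Perron–Frobenius operator P on L¹(Ω,Σ,μ). Then the following are equivalent: (i) for every f ∈ L¹(Ω,Σ,μ) the sequence (Pⁿf) converges in L¹-norm; (ii) for every B ∈ Σ with μ(B) > 0 there exist D ∈ Σ with μ(D) > 0 and a constant c > 0 such that liminf_{n→∞} inf_{A∈Σ} ( μ(φ⁻ⁿ(A) ∩ B) − c · μ(D ∩ A) ) ≥ 0. -/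
open MeasureTheory Filter Set Topology
open scoped symmDiff ENNReal

lemma pow_cancel {M : Type*} [Monoid M] {q v : M} (h : q * v = 1) (n : ℕ) : q ^ n * v ^ n = 1 := by
  induction n with
  | zero => simp
  | succ k ih => rw [pow_succ, pow_succ', mul_assoc, ← mul_assoc q v, h, one_mul, ih]

lemma hilb {H : Type*} [NormedAddCommGroup H] [InnerProductSpace ℝ H] [CompleteSpace H]
    (V Q : H →L[ℝ] H) (hQV : Q * V = 1) (hadj : ∀ x y, inner ℝ (Q x) y = inner ℝ x (V y))
    (f : H) : ∃ h, Tendsto (fun n => (V ^ n) ((Q ^ n) f)) atTop (𝓝 h) ∧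
      ∀ n, (V ^ n) ((Q ^ n) h) = h := by
  have hadjn : ∀ n x y, inner ℝ ((Q ^ n) x) y = inner ℝ x ((V ^ n) y) := by
    intro n
    induction n with
    | zero => simp
    | succ k ih =>
      intro x y
      rw [pow_succ', pow_succ, mul_apply_eq_comp, hadj, ih,
        mul_apply_eq_comp]
  have hc : ∀ n x, (Q ^ n) ((V ^ n) x) = x := by
    intro n x
    rw [← mul_apply_eq_comp, pow_cancel hQV]; rfl
  have hin : ∀ n k, inner ℝ ((V ^ n) ((Q ^ n) f)) ((V ^ (n+k)) ((Q ^ (n+k)) f))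
      = ‖(Q ^ (n+k)) f‖ ^ 2 := by
    intro n k
    rw [real_inner_comm, ← hadjn, pow_add V n k, mul_apply_eq_comp, hc,
      real_inner_comm, ← hadjn, ← mul_apply_eq_comp, ← pow_add, add_comm k n,
      real_inner_self_eq_norm_sq]
  have hn : ∀ n, ‖(V ^ n) ((Q ^ n) f)‖ ^ 2 = ‖(Q ^ n) f‖ ^ 2 := by
    intro n
    rw [← real_inner_self_eq_norm_sq, ← hadjn, hc, real_inner_self_eq_norm_sq]
  have hd : ∀ n k, ‖(V ^ n) ((Q ^ n) f) - (V ^ (n+k)) ((Q ^ (n+k)) f)‖ ^ 2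
      = ‖(Q ^ n) f‖ ^ 2 - ‖(Q ^ (n+k)) f‖ ^ 2 := by
    intro n k
    rw [norm_sub_sq_real, hin, hn, hn]; ring
  have hanti : Antitone (fun n => ‖(Q ^ n) f‖ ^ 2) := by
    apply antitone_nat_of_succ_le
    intro n
    have := hd n 1
    nlinarith [sq_nonneg ‖(V ^ n) ((Q ^ n) f) - (V ^ (n+1)) ((Q ^ (n+1)) f)‖]
  have hlim := tendsto_atTop_ciInf hanti ⟨0, by rintro _ ⟨n, rfl⟩; positivity⟩
  have hcau : CauchySeq (fun n => (V ^ n) ((Q ^ n) f)) := by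
    rw [Metric.cauchySeq_iff']
    intro ε hε
    obtain ⟨N, hN⟩ := Metric.cauchySeq_iff'.1 hlim.cauchySeq (ε ^ 2) (by positivity)
    refine ⟨N, fun n hnN => ?_⟩
    obtain ⟨k, rfl⟩ := Nat.exists_eq_add_of_le hnN
    have h1 := hN _ hnN
    rw [dist_comm, Real.dist_eq] at h1
    rw [dist_comm, dist_eq_norm]
    have h2 := hd N k
    have h3 := le_abs_self (‖(Q ^ N) f‖ ^ 2 - ‖(Q ^ (N+k)) f‖ ^ 2)
    exact lt_of_pow_lt_pow_left₀ 2 hε.le (by linarith)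
  obtain ⟨h, hh⟩ := cauchySeq_tendsto_of_complete hcau
  refine ⟨h, hh, fun n => ?_⟩
  have ht : Tendsto (fun k => (V ^ (k+n)) ((Q ^ (k+n)) f)) atTop (𝓝 h) :=
    (tendsto_add_atTop_iff_nat n).2 hh
  have ht2 : Tendsto (fun k => (V ^ n * Q ^ n) ((V ^ (k+n)) ((Q ^ (k+n)) f))) atTop
      (𝓝 ((V ^ n * Q ^ n) h)) := ((V ^ n * Q ^ n).continuous.tendsto h).comp ht
  have he : (fun k => (V ^ n * Q ^ n) ((V ^ (k+n)) ((Q ^ (k+n)) f))) =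
      fun k => (V ^ (k+n)) ((Q ^ (k+n)) f) := by
    funext k
    rw [add_comm k n, pow_add V n k]
    simp only [mul_apply_eq_comp]
    rw [hc]
  rw [he] at ht2
  exact tendsto_nhds_unique ht2 ht

section
variable {Ω : Type*} [m : MeasurableSpace Ω] {μ : Measure Ω} [IsProbabilityMeasure μ]
    {φ : Ω → Ω}

/-- Koopman operator on L². -/
noncomputable def koop (hmp : MeasurePreserving φ μ μ) : Lp ℝ 2 μ →L[ℝ] Lp ℝ 2 μ :=
  (Lp.compMeasurePreservingₗᵢ ℝ φ hmp).toContinuousLinearMap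

lemma koop_coe (hmp : MeasurePreserving φ μ μ) (g : Lp ℝ 2 μ) : koop hmp g =ᵐ[μ] g ∘ φ :=
  Lp.coeFn_compMeasurePreserving g hmp

lemma koop_norm (hmp : MeasurePreserving φ μ μ) (g : Lp ℝ 2 μ) : ‖koop hmp g‖ = ‖g‖ :=
  (Lp.compMeasurePreservingₗᵢ ℝ φ hmp).norm_map g

lemma koop_pow_norm (hmp : MeasurePreserving φ μ μ) (n : ℕ) (g : Lp ℝ 2 μ) :
    ‖(koop hmp ^ n) g‖ = ‖g‖ := by
  induction n with
  | zero => simp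
  | succ k ih => rw [pow_succ', mul_apply_eq_comp, koop_norm, ih]

lemma koop_pow_coe (hmp : MeasurePreserving φ μ μ) (n : ℕ) (g : Lp ℝ 2 μ) :
    (koop hmp ^ n) g =ᵐ[μ] g ∘ φ^[n] := by
  induction n with
  | zero => simp
  | succ k ih =>
    rw [pow_succ', mul_apply_eq_comp]
    refine (koop_coe hmp _).trans ?_
    rw [Function.iterate_succ, ← Function.comp_assoc]
    exact hmp.quasiMeasurePreserving.ae_eq_comp ih

lemma koop_adj (hmp : MeasurePreserving φ μ μ) (x y : Lp ℝ 2 μ) :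
    inner ℝ (ContinuousLinearMap.adjoint (koop hmp) x) y = inner ℝ x (koop hmp y) :=
  ContinuousLinearMap.adjoint_inner_left _ _ _

lemma koop_cancel (hmp : MeasurePreserving φ μ μ) :
    ContinuousLinearMap.adjoint (koop hmp) * koop hmp = 1 := by
  ext1 x
  refine ext_inner_right ℝ fun y => ?_
  rw [mul_apply_eq_comp, koop_adj]
  exact (Lp.compMeasurePreservingₗᵢ ℝ φ hmp).inner_map_map x y

lemma pf_eq (hmp : MeasurePreserving φ μ μ)
    {P : Lp ℝ 1 μ →L[ℝ] Lp ℝ 1 μ}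
    (hP : ∀ (f : Lp ℝ 1 μ) (A : Set Ω), MeasurableSet A →
      ∫ x in A, (P f) x ∂μ = ∫ x in φ ⁻¹' A, f x ∂μ) (u : Lp ℝ 1 μ) (v : Lp ℝ 2 μ)
    (huv : u =ᵐ[μ] v) : P u =ᵐ[μ] ContinuousLinearMap.adjoint (koop hmp) v := by
  apply Integrable.ae_eq_of_forall_setIntegral_eq
  · exact L1.integrable_coeFn _
  · exact (Lp.memLp _).integrable (by norm_num)
  intro A hA _
  rw [hP u A hA, ← L2.inner_indicatorConstLp_one (𝕜 := ℝ) hA (measure_ne_top _ _),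
    real_inner_comm, koop_adj, real_inner_comm,
    show koop hmp (indicatorConstLp 2 hA (measure_ne_top _ _) 1) = _ from
      Lp.indicatorConstLp_compMeasurePreserving hA (measure_ne_top _ _) (1:ℝ) hmp,
    L2.inner_indicatorConstLp_one]
  exact integral_congr_ae (ae_restrict_of_ae huv)

lemma pf_pow_eq (hmp : MeasurePreserving φ μ μ)
    {P : Lp ℝ 1 μ →L[ℝ] Lp ℝ 1 μ}
    (hP : ∀ (f : Lp ℝ 1 μ) (A : Set Ω), MeasurableSet A →
      ∫ x in A, (P f) x ∂μ = ∫ x in φ ⁻¹' A, f x ∂μ) (u : Lp ℝ 1 μ) (v : Lp ℝ 2 μ)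
    (huv : u =ᵐ[μ] v) (n : ℕ) :
    (P ^ n) u =ᵐ[μ] (ContinuousLinearMap.adjoint (koop hmp) ^ n) v := by
  induction n with
  | zero => simpa
  | succ k ih =>
    rw [pow_succ', pow_succ', mul_apply_eq_comp, mul_apply_eq_comp]
    exact pf_eq hmp hP _ _ ih

lemma pf_pow_int (hmp : MeasurePreserving φ μ μ)
    {P : Lp ℝ 1 μ →L[ℝ] Lp ℝ 1 μ}
    (hP : ∀ (f : Lp ℝ 1 μ) (A : Set Ω), MeasurableSet A →
      ∫ x in A, (P f) x ∂μ = ∫ x in φ ⁻¹' A, f x ∂μ) (n : ℕ) :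
    ∀ (f : Lp ℝ 1 μ) (A : Set Ω), MeasurableSet A →
      ∫ x in A, ((P ^ n) f) x ∂μ = ∫ x in φ^[n] ⁻¹' A, f x ∂μ := by
  induction n with
  | zero => simp
  | succ k ih =>
    intro f A hA
    rw [pow_succ', mul_apply_eq_comp, hP _ _ hA, ih _ _ (hmp.measurable hA),
      ← preimage_comp, ← Function.iterate_succ']

lemma pf_norm (hmp : MeasurePreserving φ μ μ)
    {P : Lp ℝ 1 μ →L[ℝ] Lp ℝ 1 μ}
    (hP : ∀ (f : Lp ℝ 1 μ) (A : Set Ω), MeasurableSet A →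
      ∫ x in A, (P f) x ∂μ = ∫ x in φ ⁻¹' A, f x ∂μ) (f : Lp ℝ 1 μ) : ‖P f‖ ≤ ‖f‖ := by
  have hm : Measurable (P f : Ω → ℝ) := (Lp.stronglyMeasurable _).measurable
  have hA : MeasurableSet {x | 0 ≤ (P f) x} := measurableSet_le measurable_const hm
  have hi := L1.integrable_coeFn f
  have hA' := hmp.measurable hA
  rw [L1.norm_eq_integral_norm, L1.norm_eq_integral_norm,
    ← integral_add_compl hA (L1.integrable_coeFn _).norm,
    ← integral_add_compl hA' (L1.integrable_coeFn _).norm]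
  have h1 : ∫ x in {x | 0 ≤ (P f) x}, ‖(P f) x‖ ∂μ = ∫ x in {x | 0 ≤ (P f) x}, (P f) x ∂μ :=
    setIntegral_congr_fun hA fun x hx => by
      simp only [mem_ofPred_eq] at hx
      simp [abs_of_nonneg hx]
  have h2 : ∫ x in {x | 0 ≤ (P f) x}ᶜ, ‖(P f) x‖ ∂μ
      = - ∫ x in {x | 0 ≤ (P f) x}ᶜ, (P f) x ∂μ := by
    rw [← integral_neg]
    exact setIntegral_congr_fun hA.compl fun x hx => by
      simp only [mem_compl_iff, mem_ofPred_eq, not_le] at hx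
      simp [abs_of_neg hx]
  rw [h1, h2, hP _ _ hA, hP _ _ hA.compl, ← integral_neg, preimage_compl]
  refine add_le_add ?_ ?_
  · exact integral_mono hi.integrableOn hi.norm.integrableOn fun x => le_abs_self _
  · exact integral_mono hi.neg.integrableOn hi.norm.integrableOn fun x => neg_le_abs _

lemma pf_pow_norm (hmp : MeasurePreserving φ μ μ)
    {P : Lp ℝ 1 μ →L[ℝ] Lp ℝ 1 μ}
    (hP : ∀ (f : Lp ℝ 1 μ) (A : Set Ω), MeasurableSet A →
      ∫ x in A, (P f) x ∂μ = ∫ x in φ ⁻¹' A, f x ∂μ) (n : ℕ) (f : Lp ℝ 1 μ) :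
    ‖(P ^ n) f‖ ≤ ‖f‖ := by
  induction n with
  | zero => simp
  | succ k ih =>
    rw [pow_succ', mul_apply_eq_comp]
    exact (pf_norm hmp hP _).trans ih

/-- The quantity in (ii). -/
noncomputable def uu (μ : Measure Ω) (φ : Ω → Ω) (B D : Set Ω) (c : ℝ) (n : ℕ) : ℝ :=
  ⨅ A : {A : Set Ω // MeasurableSet A},
          ((μ (φ^[n] ⁻¹' (A : Set Ω) ∩ B)).toReal - c * (μ (D ∩ (A : Set Ω))).toReal)

lemma low (B D : Set Ω) {c : ℝ} (hc : 0 < c) (n : ℕ) (A : Set Ω) :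
    -c ≤ (μ (φ^[n] ⁻¹' (A : Set Ω) ∩ B)).toReal - c * (μ (D ∩ (A : Set Ω))).toReal := by
  have h1 : (μ (D ∩ A)).toReal ≤ 1 := measureReal_le_one
  have h2 : 0 ≤ (μ (φ^[n] ⁻¹' (A : Set Ω) ∩ B)).toReal := ENNReal.toReal_nonneg
  nlinarith

lemma uu_bdd (B D : Set Ω) {c : ℝ} (hc : 0 < c) (n : ℕ) :
    BddBelow (range fun A : {A : Set Ω // MeasurableSet A} =>
      ((μ (φ^[n] ⁻¹' (A : Set Ω) ∩ B)).toReal - c * (μ (D ∩ (A : Set Ω))).toReal)) :=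
  ⟨-c, by rintro _ ⟨A, rfl⟩; exact low B D hc n A⟩

lemma uu_ev (B D : Set Ω) {c : ℝ} (hc : 0 < c) (h : 0 ≤ atTop.liminf (uu μ φ B D c))
    {ε : ℝ} (hε : 0 < ε) : ∀ᶠ n in atTop, ∀ A : Set Ω, MeasurableSet A →
      -ε ≤ (μ (φ^[n] ⁻¹' (A : Set Ω) ∩ B)).toReal - c * (μ (D ∩ (A : Set Ω))).toReal := by
  have hne : Nonempty {A : Set Ω // MeasurableSet A} := ⟨⟨∅, MeasurableSet.empty⟩⟩
  have hb : IsBoundedUnder (· ≥ ·) atTop (uu μ φ B D c) :=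
    isBoundedUnder_of ⟨-c, fun n => le_ciInf fun A => low B D hc n A⟩
  filter_upwards [eventually_lt_of_lt_liminf (lt_of_lt_of_le (neg_lt_zero.2 hε) h) hb]
    with n hn A hA
  exact hn.le.trans (ciInf_le (uu_bdd B D hc n) ⟨A, hA⟩)

/-- The forward direction. -/
lemma forward (hmp : MeasurePreserving φ μ μ)
    {P : Lp ℝ 1 μ →L[ℝ] Lp ℝ 1 μ}
    (hP : ∀ (f : Lp ℝ 1 μ) (A : Set Ω), MeasurableSet A →
      ∫ x in A, (P f) x ∂μ = ∫ x in φ ⁻¹' A, f x ∂μ)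
    (h : ∀ f : Lp ℝ 1 μ, ∃ g : Lp ℝ 1 μ, Tendsto (fun n : ℕ => (P ^ n) f) atTop (𝓝 g))
    (B : Set Ω) (hB : MeasurableSet B) (hB0 : 0 < μ B) :
    ∃ D : Set Ω, MeasurableSet D ∧ 0 < μ D ∧ ∃ c : ℝ, 0 < c ∧
        0 ≤ atTop.liminf (uu μ φ B D c) := by
  obtain ⟨g, hg⟩ := h (indicatorConstLp 1 hB (measure_ne_top μ B) 1)
  have hpn : ∀ n A, MeasurableSet A →
      ∫ x in A, ((P ^ n) (indicatorConstLp 1 hB (measure_ne_top μ B) 1)) x ∂μ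
        = (μ (φ^[n] ⁻¹' A ∩ B)).toReal := by
    intro n A hA
    rw [pf_pow_int hmp hP n _ _ hA,
      integral_congr_ae (ae_restrict_of_ae indicatorConstLp_coeFn), setIntegral_indicator hB]
    simp [Measure.real]
  have hgint : ∫ x, g x ∂μ = (μ B).toReal := by
    have h1 := ((continuous_setIntegral (E := ℝ) (μ := μ) univ).tendsto g).comp hg
    refine tendsto_nhds_unique (l := atTop) (f := fun _ : ℕ => (μ B).toReal) ?_ tendsto_const_nhds
    rw [← setIntegral_univ]
    refine h1.congr fun n => ?_
    simp only [Function.comp]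
    rw [hpn n univ MeasurableSet.univ]; simp
  have hBpos : 0 < (μ B).toReal := ENNReal.toReal_pos hB0.ne' (measure_ne_top _ _)
  set c := (μ B).toReal / 2 with hc
  have hcpos : 0 < c := by positivity
  have hgi := L1.integrable_coeFn g
  have hD : MeasurableSet {x | c < g x} :=
    measurableSet_lt measurable_const (Lp.stronglyMeasurable _).measurable
  refine ⟨{x | c < g x}, hD, ?_, c, hcpos, ?_⟩
  · rw [pos_iff_ne_zero]
    intro h0
    have h1 : ∀ᵐ x ∂μ, g x ≤ c := by
      rw [ae_iff]; simpa using h0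
    have h2 := integral_mono_ae hgi (integrable_const c) h1
    rw [hgint] at h2
    simp at h2
    linarith
  have hlow : ∀ n, -‖(P ^ n) (indicatorConstLp 1 hB (measure_ne_top μ B) 1) - g‖ ≤
      uu μ φ B {x | c < g x} c n := by
    intro n
    have hne : Nonempty {A : Set Ω // MeasurableSet A} := ⟨⟨∅, MeasurableSet.empty⟩⟩
    refine le_ciInf fun ⟨A, hA⟩ => ?_
    set F := (P ^ n) (indicatorConstLp 1 hB (measure_ne_top μ B) 1) with hF
    have hFi := L1.integrable_coeFn F
    have hDA := hD.inter hA
    have e1 : (μ (φ^[n] ⁻¹' ({x | c < g x} ∩ A) ∩ B)).toReal ≤ (μ (φ^[n] ⁻¹' A ∩ B)).toReal :=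
      ENNReal.toReal_mono (measure_ne_top _ _) (measure_mono (by
        intro x hx; exact ⟨hx.1.2, hx.2⟩))
    have e2 := hpn n _ hDA
    rw [← hF] at e2
    have e3 : c * (μ ({x | c < g x} ∩ A)).toReal ≤ ∫ x in {x | c < g x} ∩ A, g x ∂μ := by
      have := setIntegral_mono_on (f := fun _ => c) (μ := μ) (integrable_const c).integrableOn
        hgi.integrableOn hDA (fun x hx => (show c < g x from hx.1).le)
      simp [Measure.real] at this
      linarith
    have e4 : -‖F - g‖ ≤ (∫ x in {x | c < g x} ∩ A, F x ∂μ) - ∫ x in {x | c < g x} ∩ A, g x ∂μ := by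
      rw [← integral_sub hFi.integrableOn hgi.integrableOn, L1.norm_eq_integral_norm]
      have a1 : ∫ a, ‖(F - g : Lp ℝ 1 μ) a‖ ∂μ = ∫ a, ‖F a - g a‖ ∂μ := by
        refine integral_congr_ae ?_
        filter_upwards [Lp.coeFn_sub F g] with x hx
        rw [hx]; rfl
      rw [a1]
      have a2 := norm_integral_le_integral_norm (μ := μ.restrict ({x | c < g x} ∩ A))
        (fun a => F a - g a)
      have a3 := setIntegral_le_integral (s := {x | c < g x} ∩ A) (hFi.sub hgi).norm
        (Eventually.of_forall fun x => norm_nonneg _)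
      have a4 := neg_le_of_abs_le (a2.trans a3)
      exact a4
    simp only
    linarith
  have hup : ∀ n, uu μ φ B {x | c < g x} c n ≤ 0 := by
    intro n
    refine (ciInf_le (uu_bdd B _ hcpos n) ⟨∅, MeasurableSet.empty⟩).trans ?_
    simp
  have ht : Tendsto (uu μ φ B {x | c < g x} c) atTop (𝓝 0) := by
    refine tendsto_of_tendsto_of_tendsto_of_le_of_le ?_ tendsto_const_nhds hlow hup
    have := (tendsto_iff_norm_sub_tendsto_zero.1 hg).neg
    simpa using this
  rw [ht.liminf_eq]

/-- The tail-measurable functions are invariant. -/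
lemma invar (hmp : MeasurePreserving φ μ μ)
    (h : ∀ B : Set Ω, MeasurableSet B → 0 < μ B →
      ∃ D : Set Ω, MeasurableSet D ∧ 0 < μ D ∧ ∃ c : ℝ, 0 < c ∧
        0 ≤ atTop.liminf (uu μ φ B D c))
    (f : Lp ℝ 2 μ) (g : ℕ → Lp ℝ 2 μ) (hg : ∀ n, (koop hmp ^ n) (g n) = f) :
    koop hmp f = f := by
  have hfm : Measurable (f : Ω → ℝ) := (Lp.stronglyMeasurable _).measurable
  have hgm : ∀ n, Measurable (g n : Ω → ℝ) := fun n => (Lp.stronglyMeasurable _).measurable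
  have hgf : ∀ n, (g n) ∘ φ^[n] =ᵐ[μ] f := fun n => by
    rw [← hg n]; exact (koop_pow_coe hmp n (g n)).symm
  have key : ∀ t : ℝ, μ {x | t < f x ∧ f (φ x) ≤ t} = 0 := by
    intro t
    by_contra hne
    have hBm : MeasurableSet {x | t < f x ∧ f (φ x) ≤ t} :=
      (measurableSet_lt measurable_const hfm).inter
        (measurableSet_le (hfm.comp hmp.measurable) measurable_const)
    set B := {x | t < f x ∧ f (φ x) ≤ t} with hB
    obtain ⟨D, hD, hD0, c, hc, hl⟩ := h B hBm (pos_iff_ne_zero.2 hne)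
    have hDpos : 0 < (μ D).toReal := ENNReal.toReal_pos hD0.ne' (measure_ne_top _ _)
    obtain ⟨N, hN⟩ := eventually_atTop.1 (uu_ev B D hc hl (ε := c * (μ D).toReal / 3) (by positivity))
    set C := {x | t < g (N+1) x ∧ g (N+1) (φ x) ≤ t} with hC
    have hCm : MeasurableSet C :=
      (measurableSet_lt measurable_const (hgm _)).inter
        (measurableSet_le ((hgm _).comp hmp.measurable) measurable_const)
    have hBC : μ ((φ^[N+1] ⁻¹' Cᶜ) ∩ B) = 0 := by
      have e1 := hgf (N+1)
      have e2 := hmp.quasiMeasurePreserving.ae_eq_comp e1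
      have : ∀ᵐ x ∂μ, ¬ x ∈ (φ^[N+1] ⁻¹' Cᶜ) ∩ B := by
        filter_upwards [e1, e2] with x h1 h2
        rintro ⟨h3, h4, h5⟩
        apply h3
        simp only [Function.comp] at h1 h2
        refine ⟨by rw [h1]; exact h4, ?_⟩
        rw [← Function.iterate_succ_apply' φ, Function.iterate_succ_apply, h2]
        exact h5
      exact measure_eq_zero_iff_ae_notMem.2 this
    have i1 := hN (N+1) (by omega) Cᶜ hCm.compl
    have i2 := hN N le_rfl (φ ⁻¹' Cᶜ) (hmp.measurable hCm.compl)
    rw [← preimage_comp, ← Function.iterate_succ', hBC] at i2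
    rw [hBC] at i1
    have hcov : μ D ≤ μ (D ∩ Cᶜ) + μ (D ∩ φ ⁻¹' Cᶜ) := by
      refine (measure_mono ?_).trans (measure_union_le _ _)
      intro x hx
      by_cases hxC : x ∈ C
      · right
        refine ⟨hx, fun h' => ?_⟩
        exact absurd h'.1 (not_lt.2 hxC.2)
      · left; exact ⟨hx, hxC⟩
    have hcov' := ENNReal.toReal_mono (by simp) hcov
    rw [ENNReal.toReal_add (measure_ne_top _ _) (measure_ne_top _ _)] at hcov'
    simp only [ENNReal.toReal_zero, zero_sub, neg_le_neg_iff] at i1 i2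
    nlinarith
  have hle : ∀ᵐ x ∂μ, f x ≤ f (φ x) := by
    have : ∀ᵐ x ∂μ, ∀ q : ℚ, ¬ ((q:ℝ) < f x ∧ f (φ x) ≤ q) := by
      rw [ae_all_iff]; intro q
      rw [ae_iff]; simpa using key q
    filter_upwards [this] with x hx
    by_contra hlt
    obtain ⟨q, h1, h2⟩ := exists_rat_btwn (not_le.1 hlt)
    exact hx q ⟨h2, h1.le⟩
  have hfi : Integrable f μ := (Lp.memLp f).integrable (by norm_num)
  have hfi2 : Integrable (fun x => f (φ x)) μ := hmp.integrable_comp_of_integrable hfi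
  have hint : ∫ x, f (φ x) ∂μ = ∫ x, f x ∂μ := by
    have e := integral_map (μ := μ) (f := (f : Ω → ℝ)) hmp.measurable.aemeasurable
      hfm.aestronglyMeasurable
    have e' : ∀ ν : Measure Ω, ν = μ → ∫ x, f x ∂ν = ∫ x, f x ∂μ := by
      rintro ν rfl; rfl
    rw [← e, e' _ hmp.map_eq]
  have h0 : (fun x => f (φ x) - f x) =ᵐ[μ] 0 := by
    rw [← integral_eq_zero_iff_of_nonneg_ae]
    · rw [integral_sub hfi2 hfi, hint, sub_self]
    · filter_upwards [hle] with x hx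
      simpa using hx
    · exact hfi2.sub hfi
  apply Lp.ext
  refine (koop_coe hmp f).trans ?_
  filter_upwards [h0] with x hx
  exact sub_eq_zero.1 hx

lemma backward (hmp : MeasurePreserving φ μ μ)
    {P : Lp ℝ 1 μ →L[ℝ] Lp ℝ 1 μ}
    (hP : ∀ (f : Lp ℝ 1 μ) (A : Set Ω), MeasurableSet A →
      ∫ x in A, (P f) x ∂μ = ∫ x in φ ⁻¹' A, f x ∂μ)
    (h : ∀ B : Set Ω, MeasurableSet B → 0 < μ B →
      ∃ D : Set Ω, MeasurableSet D ∧ 0 < μ D ∧ ∃ c : ℝ, 0 < c ∧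
        0 ≤ atTop.liminf (uu μ φ B D c)) (f : Lp ℝ 1 μ) :
    CauchySeq (fun n : ℕ => (P ^ n) f) := by
  have h2 : ∀ (u : Lp ℝ 1 μ) (v : Lp ℝ 2 μ), u =ᵐ[μ] v → CauchySeq (fun n : ℕ => (P ^ n) u) := by
    intro u v huv
    obtain ⟨w, hw, hw2⟩ := hilb (koop hmp) _ (koop_cancel hmp) (koop_adj hmp) v
    have hinv := invar hmp h w _ hw2
    have hinvn : ∀ n, (koop hmp ^ n) w = w := by
      intro n
      induction n with
      | zero => simp
      | succ k ih => rw [pow_succ, mul_apply_eq_comp, hinv, ih]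
    have hlim : Tendsto (fun n => (ContinuousLinearMap.adjoint (koop hmp) ^ n) v) atTop (𝓝 w) := by
      rw [tendsto_iff_norm_sub_tendsto_zero] at hw ⊢
      refine hw.congr fun n => ?_
      conv_lhs => rw [← hinvn n, ← map_sub, koop_pow_norm]
    have hw1 : MemLp w 1 μ := (Lp.memLp w).mono_exponent (by norm_num)
    have : Tendsto (fun n : ℕ => (P ^ n) u) atTop (𝓝 (hw1.toLp w)) := by
      rw [Lp.tendsto_Lp_iff_tendsto_eLpNorm'] at hlim ⊢
      refine tendsto_of_tendsto_of_tendsto_of_le_of_le tendsto_const_nhds hlim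
        (fun n => zero_le) fun n => ?_
      simp only
      rw [eLpNorm_congr_ae ((pf_pow_eq hmp hP u v huv n).sub hw1.coeFn_toLp)]
      exact eLpNorm_le_eLpNorm_of_exponent_le (by norm_num)
        ((Lp.aestronglyMeasurable _).sub (Lp.aestronglyMeasurable _))
    exact this.cauchySeq
  refine Lp.induction (by norm_num) (motive := fun f => CauchySeq (fun n : ℕ => (P ^ n) f))
    ?_ ?_ ?_ f
  · intro c s hs hμs
    refine h2 _ (indicatorConstLp 2 hs hμs.ne c) ?_
    rw [Lp.simpleFunc.coe_indicatorConst]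
    exact indicatorConstLp_coeFn.trans indicatorConstLp_coeFn.symm
  · intro f g hf hg _ h1 h2
    simp only [map_add]
    exact h1.add h2
  · refine isClosed_of_closure_subset fun u hu => ?_
    simp only [mem_ofPred_eq]
    rw [Metric.cauchySeq_iff']
    intro ε hε
    obtain ⟨v, hv, huv⟩ := Metric.mem_closure_iff.1 hu (ε/3) (by positivity)
    obtain ⟨N, hN⟩ := Metric.cauchySeq_iff'.1 hv (ε/3) (by positivity)
    refine ⟨N, fun n hn => ?_⟩
    have hd : ∀ k, dist ((P ^ k) u) ((P ^ k) v) < ε/3 := fun k => by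
      rw [dist_eq_norm, ← map_sub]
      exact (pf_pow_norm hmp hP k _).trans_lt (by rwa [← dist_eq_norm])
    have t1 := dist_triangle4 ((P ^ n) u) ((P ^ n) v) ((P ^ N) v) ((P ^ N) u)
    have := hd n
    have := hd N
    rw [dist_comm] at this
    have := hN n hn
    linarith

end

theorem stmt4 {Ω : Type*} [m : MeasurableSpace Ω] (μ : Measure Ω) [IsProbabilityMeasure μ]
    (φ : Ω → Ω) (hmp : MeasurePreserving φ μ μ)
    (P : Lp ℝ 1 μ →L[ℝ] Lp ℝ 1 μ)
    (hP : ∀ (f : Lp ℝ 1 μ) (A : Set Ω), MeasurableSet A →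
      ∫ x in A, (P f) x ∂μ = ∫ x in φ ⁻¹' A, f x ∂μ) :
    (∀ f : Lp ℝ 1 μ, ∃ g : Lp ℝ 1 μ, Tendsto (fun n : ℕ => (P ^ n) f) atTop (𝓝 g)) ↔
    (∀ B : Set Ω, MeasurableSet B → 0 < μ B →
      ∃ D : Set Ω, MeasurableSet D ∧ 0 < μ D ∧ ∃ c : ℝ, 0 < c ∧
        0 ≤ atTop.liminf (fun n : ℕ => ⨅ A : {A : Set Ω // MeasurableSet A},
          ((μ (φ^[n] ⁻¹' (A : Set Ω) ∩ B)).toReal - c * (μ (D ∩ (A : Set Ω))).toReal))) := by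
  constructor
  · intro h
    exact forward hmp hP h
  · intro h f
    exact cauchySeq_tendsto_of_complete (backward hmp hP h f)
end

section
/- Let (Ω,Σ,μ) be a probability space and φ : Ω → Ω a measure-preserving measurable transformation. Suppose that for every B ∈ Σ there exists D ∈ Σ with μ(D) > 0 such that lim_{n→∞} sup_{A∈Σ, A⊆D} | μ(φ⁻ⁿ(A) ∩ B) − μ(A)μ(B) | = 0. Then the system is ergodic: every set Ω₁ ∈ Σ with μ(φ⁻¹(Ω₁) Δ Ω₁) = 0 satisfies μ(Ω₁) ∈ {0,1}. -/
open MeasureTheory Filter Set Topology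
open scoped symmDiff ENNReal

theorem stmt6 {Ω : Type*} [m : MeasurableSpace Ω] (μ : Measure Ω) [IsProbabilityMeasure μ]
    (φ : Ω → Ω) (hmp : MeasurePreserving φ μ μ)
    (hmix : ∀ B : Set Ω, MeasurableSet B → ∃ D : Set Ω, MeasurableSet D ∧ 0 < μ D ∧
      Tendsto (fun n : ℕ => ⨆ A : {A : Set Ω // MeasurableSet A ∧ A ⊆ D},
        |(μ (φ^[n] ⁻¹' (A : Set Ω) ∩ B)).toReal - (μ (A : Set Ω)).toReal * (μ B).toReal|)
        atTop (𝓝 0)) :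
    ∀ Ω₁ : Set Ω, MeasurableSet Ω₁ → μ ((φ ⁻¹' Ω₁) ∆ Ω₁) = 0 → μ Ω₁ = 0 ∨ μ Ω₁ = 1 := by
  intro I hI hinv
  obtain ⟨D, hD, hDpos, hlim⟩ := hmix I hI
  have hae : φ ⁻¹' I =ᵐ[μ] I := measure_symmDiff_eq_zero_iff.mp hinv
  have haen : ∀ n : ℕ, φ^[n] ⁻¹' I =ᵐ[μ] I := fun n =>
    hmp.quasiMeasurePreserving.preimage_iterate_ae_eq n hae
  have key : ∀ A : Set Ω, MeasurableSet A → A ⊆ D → ∀ c : ℝ,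
      (∀ n : ℕ, (μ (φ^[n] ⁻¹' A ∩ I)).toReal = c) → c - (μ A).toReal * (μ I).toReal = 0 := by
    intro A hA hAD c hc
    have h1 : Tendsto (fun _ : ℕ => |c - (μ A).toReal * (μ I).toReal|) atTop (𝓝 0) := by
      refine squeeze_zero (fun _ => abs_nonneg _) (fun n => ?_) hlim
      have hb : BddAbove (range fun A : {A : Set Ω // MeasurableSet A ∧ A ⊆ D} =>
          |(μ (φ^[n] ⁻¹' (A : Set Ω) ∩ I)).toReal - (μ (A : Set Ω)).toReal * (μ I).toReal|) := by
        refine ⟨1, ?_⟩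
        rintro _ ⟨A, rfl⟩
        have p : ∀ s : Set Ω, 0 ≤ (μ s).toReal ∧ (μ s).toReal ≤ 1 := fun s =>
          ⟨ENNReal.toReal_nonneg, measureReal_le_one⟩
        have a1 := p (φ^[n] ⁻¹' (A : Set Ω) ∩ I)
        have a2 := p (A : Set Ω)
        have a3 := p I
        have a4 := mul_nonneg a2.1 a3.1
        have a5 := mul_le_one₀ a2.2 a3.1 a3.2
        exact abs_le.mpr ⟨by linarith, by linarith⟩
      have := le_ciSup hb ⟨A, hA, hAD⟩
      simpa only [hc n] using this
    exact abs_eq_zero.mp (tendsto_nhds_unique tendsto_const_nhds h1)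
  have e1 := key (D ∩ I) (hD.inter hI) inter_subset_left (μ (D ∩ I)).toReal (by
    intro n
    congr 1
    rw [← (hmp.iterate n).measure_preimage (hD.inter hI).nullMeasurableSet]
    apply measure_congr
    filter_upwards [(haen n).mem_iff] with x hx
    apply propext
    change (φ^[n] x ∈ D ∩ I ∧ x ∈ I) ↔ φ^[n] x ∈ D ∩ I
    exact ⟨fun h => h.1, fun h => ⟨h, hx.mp h.2⟩⟩)
  have e2 := key (D \ I) (hD.diff hI) sdiff_subset 0 (by
    intro n
    have : μ (φ^[n] ⁻¹' (D \ I) ∩ I) = 0 := by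
      rw [measure_eq_zero_iff_ae_notMem]
      filter_upwards [(haen n).mem_iff] with x hx h
      exact h.1.2 (hx.mpr h.2)
    rw [this, ENNReal.toReal_zero])
  have e1' : (μ (D ∩ I)).toReal * (1 - (μ I).toReal) = 0 := by linarith
  have e2' : (μ (D \ I)).toReal * (μ I).toReal = 0 := by linarith
  rcases mul_eq_zero.mp e2' with h | h
  · rcases mul_eq_zero.mp e1' with h' | h'
    · have q1 := (ENNReal.toReal_eq_zero_iff _).mp h
      have q2 := (ENNReal.toReal_eq_zero_iff _).mp h'
      have q1 := q1.resolve_right (measure_ne_top _ _)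
      have q2 := q2.resolve_right (measure_ne_top _ _)
      have := measure_inter_add_sdiff (μ := μ) D hI
      rw [q1, q2] at this
      simp [← this] at hDpos
    · right
      exact (ENNReal.toReal_eq_one_iff _).mp (by linarith)
  · left
    exact ((ENNReal.toReal_eq_zero_iff _).mp h).resolve_right (measure_ne_top _ _)
end

section
/- Let (Ω,Σ,μ) be a probability space and φ : Ω → Ω a bimeasurable measure-preserving transformation. Then the following are equivalent: (i) for every A ∈ Σ with μ(A) > 0 one has lim_{n→∞} μ(φⁿ(A)) = 1 (i.e., the system is exact); (ii) for every A ∈ Σ one has lim_{n→∞} sup_{B∈Σ} | μ(φⁿ(A) ∩ B) − (lim_{m→∞} μ(φᵐ(A)))·μ(B) | = 0. -/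
open MeasureTheory Filter Set Topology
open scoped symmDiff ENNReal

theorem stmt7 {Ω : Type*} [m : MeasurableSpace Ω] (μ : Measure Ω) [IsProbabilityMeasure μ]
    (φ : Ω → Ω) (hmp : MeasurePreserving φ μ μ)
    (hbi : ∀ A : Set Ω, MeasurableSet A → MeasurableSet (φ '' A)) :
    (∀ A : Set Ω, MeasurableSet A → 0 < μ A →
        Tendsto (fun n : ℕ => μ (φ^[n] '' A)) atTop (𝓝 1)) ↔
    (∀ A : Set Ω, MeasurableSet A → ∃ a : ℝ,
        Tendsto (fun k : ℕ => (μ (φ^[k] '' A)).toReal) atTop (𝓝 a) ∧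
        Tendsto (fun n : ℕ => ⨆ B : {B : Set Ω // MeasurableSet B},
          |(μ ((φ^[n] '' A) ∩ (B : Set Ω))).toReal - a * (μ (B : Set Ω)).toReal|)
          atTop (𝓝 0)) := by
  have hm : ∀ A : Set Ω, MeasurableSet A → ∀ n : ℕ, MeasurableSet (φ^[n] '' A) := by
    intro A hA n
    induction n with
    | zero => simpa using hA
    | succ k ih =>
      rw [Function.iterate_succ', Set.image_comp]
      exact hbi _ ih
  have hle : ∀ A : Set Ω, MeasurableSet A → ∀ n : ℕ, μ A ≤ μ (φ^[n] '' A) := by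
    intro A hA n
    rw [← (hmp.iterate n).measure_preimage (hm A hA n).nullMeasurableSet]
    exact measure_mono (Set.subset_preimage_image _ _)
  have : Nonempty {B : Set Ω // MeasurableSet B} := ⟨⟨∅, MeasurableSet.empty⟩⟩
  constructor
  · intro h A hA
    by_cases h0 : ∀ n : ℕ, μ (φ^[n] '' A) = 0
    · refine ⟨0, by simp [h0], ?_⟩
      have : ∀ (n : ℕ) (B : Set Ω), μ ((φ^[n] '' A) ∩ B) = 0 := fun n B =>
        measure_mono_null Set.inter_subset_left (h0 n)
      simp [this]
    · push Not at h0
      obtain ⟨N, hN⟩ := h0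
      have h1 := h _ (hm A hA N) (pos_iff_ne_zero.mpr hN)
      have h2 : Tendsto (fun n : ℕ => μ (φ^[n] '' A)) atTop (𝓝 1) := by
        rw [← tendsto_add_atTop_iff_nat N]
        refine h1.congr fun n => ?_
        rw [Function.iterate_add, Set.image_comp]
      have h3 : Tendsto (fun k : ℕ => (μ (φ^[k] '' A)).toReal) atTop (𝓝 1) := by
        simpa [Function.comp_def] using (ENNReal.tendsto_toReal ENNReal.one_ne_top).comp h2
      refine ⟨1, h3, ?_⟩
      have h4 : Tendsto (fun k : ℕ => 1 - (μ (φ^[k] '' A)).toReal) atTop (𝓝 0) := by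
        simpa using h3.const_sub 1
      refine squeeze_zero (fun n => Real.iSup_nonneg fun B => abs_nonneg _) (fun n => ?_) h4
      refine ciSup_le fun B => ?_
      obtain ⟨B, hB⟩ := B
      change |μ.real ((φ^[n] '' A) ∩ B) - 1 * μ.real B| ≤ 1 - μ.real (φ^[n] '' A)
      have e1 := measureReal_inter_add_sdiff (μ := μ) (s := B) (hm A hA n)
      have e2 : μ.real (B \ (φ^[n] '' A)) ≤ μ.real (φ^[n] '' A)ᶜ :=
        measureReal_mono (fun x hx => hx.2)
      rw [probReal_compl_eq_one_sub (hm A hA n)] at e2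
      have e3 : 0 ≤ μ.real (B \ (φ^[n] '' A)) := measureReal_nonneg
      rw [Set.inter_comm] at e1
      rw [abs_le]
      constructor <;> linarith
  · intro h A hA hpos
    obtain ⟨a, ha, hs⟩ := h A hA
    have ha0 : 0 < a := by
      refine lt_of_lt_of_le (ENNReal.toReal_pos hpos.ne' (measure_ne_top μ A)) ?_
      exact ge_of_tendsto' ha fun n => ENNReal.toReal_mono (measure_ne_top _ _) (hle A hA n)
    have h1 : Tendsto (fun k : ℕ => a * (1 - (μ (φ^[k] '' A)).toReal)) atTop (𝓝 0) := by
      refine squeeze_zero (fun n => mul_nonneg ha0.le ?_) (fun n => ?_) hs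
      · have : μ.real (φ^[n] '' A) ≤ 1 := measureReal_le_one
        exact sub_nonneg.mpr this
      · have hb : BddAbove (Set.range fun B : {B : Set Ω // MeasurableSet B} =>
            |(μ ((φ^[n] '' A) ∩ (B : Set Ω))).toReal - a * (μ (B : Set Ω)).toReal|) := by
          refine ⟨1 + a, ?_⟩
          rintro _ ⟨⟨B, hB⟩, rfl⟩
          change |μ.real ((φ^[n] '' A) ∩ B) - a * μ.real B| ≤ 1 + a
          have i1 : μ.real ((φ^[n] '' A) ∩ B) ≤ 1 := measureReal_le_one
          have i2 : μ.real B ≤ 1 := measureReal_le_one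
          have i3 : 0 ≤ μ.real ((φ^[n] '' A) ∩ B) := measureReal_nonneg
          have i4 : 0 ≤ μ.real B := measureReal_nonneg
          rw [abs_le]
          constructor <;> nlinarith
        refine le_trans ?_ (le_ciSup hb ⟨(φ^[n] '' A)ᶜ, (hm A hA n).compl⟩)
        change a * (1 - μ.real (φ^[n] '' A)) ≤
          |μ.real ((φ^[n] '' A) ∩ (φ^[n] '' A)ᶜ) - a * μ.real (φ^[n] '' A)ᶜ|
        rw [probReal_compl_eq_one_sub (hm A hA n), Set.inter_compl_self, measureReal_empty,
          zero_sub, abs_neg]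
        exact le_abs_self _
    have h2 := tendsto_nhds_unique h1 ((ha.const_sub 1).const_mul a)
    have h3 : a = 1 := by
      rcases mul_eq_zero.mp h2.symm with h | h <;> linarith
    subst h3
    rw [← ENNReal.tendsto_toReal_iff (fun _ => measure_ne_top _ _) ENNReal.one_ne_top]
    simpa using ha
end

section
/- Let (Ω,Σ,μ) be a probability space and φ : Ω → Ω a measure-preserving measurable transformation with Perron–Frobenius operator P on L¹(Ω,Σ,μ). Then for every A ∈ Σ and every m ∈ ℕ₀, the function Pᵐ(1_A) vanishes μ-almost everywhere on the set { E(1_A | Σ_inv) = 0 }; equivalently, {Pᵐ 1_A > 0} ⊆ {E(1_A | Σ_inv) > 0} up to a μ-null set. -/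
open MeasureTheory Filter Set Topology
open scoped symmDiff ENNReal

theorem stmt9 {Ω : Type*} [m : MeasurableSpace Ω] (μ : Measure Ω) [IsProbabilityMeasure μ]
    (φ : Ω → Ω) (hmp : MeasurePreserving φ μ μ)
    (P : Lp ℝ 1 μ →L[ℝ] Lp ℝ 1 μ)
    (hP : ∀ (f : Lp ℝ 1 μ) (A : Set Ω), MeasurableSet A →
      ∫ x in A, (P f) x ∂μ = ∫ x in φ ⁻¹' A, f x ∂μ)
    (A : Set Ω) (hA : MeasurableSet A) (k : ℕ) :
    ∀ᵐ x ∂μ, (μ[A.indicator (fun _ => (1 : ℝ))|invAlg m φ]) x = 0 →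
      ((P ^ k) (indicatorConstLp 1 hA (measure_ne_top μ A) (1 : ℝ))) x = 0 := by
  have hle : invAlg m φ ≤ m := fun s hs => hs.1
  set g := μ[A.indicator (fun _ => (1 : ℝ))|invAlg m φ] with hg
  have hgm : Measurable[invAlg m φ] g := stronglyMeasurable_condExp.measurable
  have hZ' : MeasurableSet[invAlg m φ] (g ⁻¹' {0}) := hgm (measurableSet_singleton 0)
  set Z : Set Ω := g ⁻¹' {0} with hZdef
  have hZ : MeasurableSet[m] Z := hle _ hZ'
  have hZinv : φ ⁻¹' Z = Z := hZ'.2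
  have hint : Integrable (A.indicator (fun _ => (1 : ℝ))) μ :=
    (integrable_const (1 : ℝ)).indicator hA
  have hzero : ∫ x in Z, A.indicator (fun _ => (1 : ℝ)) x ∂μ = 0 := by
    rw [← setIntegral_condExp hle hint hZ']
    exact setIntegral_eq_zero_of_forall_eq_zero fun x hx => hx
  have key : ∀ k : ℕ, ∀ᵐ x ∂(μ.restrict Z),
      ((P ^ k) (indicatorConstLp 1 hA (measure_ne_top μ A) (1 : ℝ))) x = 0 := by
    intro k
    induction k with
    | zero =>
      have h1 : A.indicator (fun _ => (1 : ℝ)) =ᵐ[μ.restrict Z] 0 := by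
        refine (integral_eq_zero_iff_of_nonneg ?_ hint.restrict).1 hzero
        exact fun x => Set.indicator_nonneg (fun _ _ => zero_le_one) x
      have h2 := ae_restrict_of_ae (s := Z)
        (indicatorConstLp_coeFn (p := 1) (hs := hA) (hμs := measure_ne_top μ A) (c := (1 : ℝ)))
      filter_upwards [h1, h2] with x hx1 hx2
      rw [pow_zero, ContinuousLinearMap.one_apply, hx2, hx1]
      rfl
    | succ n ih =>
      rw [pow_succ', ContinuousLinearMap.mul_apply]
      set f := (P ^ n) (indicatorConstLp 1 hA (measure_ne_top μ A) (1 : ℝ))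
      refine Integrable.ae_eq_zero_of_forall_setIntegral_eq_zero
        ((L1.integrable_coeFn (P f)).restrict) ?_
      intro B hB _
      rw [Measure.restrict_restrict hB, hP f _ (hB.inter hZ), Set.preimage_inter, hZinv,
        ← Measure.restrict_restrict (hmp.measurable hB)]
      exact integral_eq_zero_of_ae (ae_restrict_of_ae ih)
  exact (ae_restrict_iff' hZ).1 (key k)
end

section
/- Let X be a real Banach space and P : X → X a bounded linear operator with ‖P‖ ≤ 1, and let T = P* be its adjoint acting on the dual space X*. Let F = ⋂_{n∈ℕ} Tⁿ(B_{X*}), where B_{X*} is the closed unit ball of X*. Then for f ∈ X the following are equivalent: (i) ‖Pⁿ f‖ → 0 as n → ∞; (ii) h(f) = 0 for every h ∈ F. -/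
open Filter Set Topology

theorem stmt12 {X : Type*} [NormedAddCommGroup X] [NormedSpace ℝ X] [CompleteSpace X]
    (P : X →L[ℝ] X) (hP : ‖P‖ ≤ 1)
    (T : (X →L[ℝ] ℝ) → (X →L[ℝ] ℝ)) (hT : ∀ h : X →L[ℝ] ℝ, T h = h.comp P)
    (f : X) :
    Tendsto (fun n : ℕ => ‖(P ^ n) f‖) atTop (𝓝 0) ↔
      ∀ h ∈ ⋂ n : ℕ, T^[n] '' {g : X →L[ℝ] ℝ | ‖g‖ ≤ 1}, h f = 0 := by
  have hTn : ∀ (n : ℕ) (g : X →L[ℝ] ℝ), T^[n] g = g.comp (P ^ n) := by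
    intro n
    induction n with
    | zero => intro g; ext x; simp
    | succ k ih =>
      intro g
      rw [Function.iterate_succ_apply, ih, hT]
      ext x
      simp [pow_succ']
  have hP1 : ∀ x, ‖P x‖ ≤ ‖x‖ := fun x => by
    simpa using P.le_of_opNorm_le hP x
  constructor
  · intro hlim h hh
    have hb : ∀ n : ℕ, ‖h f‖ ≤ ‖(P ^ n) f‖ := by
      intro n
      obtain ⟨g, hg, rfl⟩ := mem_iInter.1 hh n
      rw [hTn]
      simpa using g.le_of_opNorm_le hg ((P ^ n) f)
    exact norm_le_zero_iff.1 (ge_of_tendsto' hlim hb)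
  · intro H
    have hanti : Antitone (fun n : ℕ => ‖(P ^ n) f‖) := by
      apply antitone_nat_of_succ_le
      intro n
      simpa [pow_succ'] using hP1 ((P ^ n) f)
    have hbdd : BddBelow (range (fun n : ℕ => ‖(P ^ n) f‖)) :=
      ⟨0, by rintro _ ⟨n, rfl⟩; exact norm_nonneg _⟩
    have hlim := tendsto_atTop_ciInf hanti hbdd
    set c := ⨅ n : ℕ, ‖(P ^ n) f‖ with hc
    have hcn : ∀ n : ℕ, c ≤ ‖(P ^ n) f‖ := fun n => ciInf_le hbdd n
    have hc0 : 0 ≤ c := le_ciInf fun n => norm_nonneg _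
    rcases hc0.eq_or_lt with h0 | hpos
    · rwa [← h0] at hlim
    exfalso
    let S : ℕ → WeakDual ℝ X → WeakDual ℝ X := fun n g =>
      StrongDual.toWeakDual ((WeakDual.toStrongDual g).comp (P ^ n))
    have hSapp : ∀ n g x, S n g x = g ((P ^ n) x) := fun n g x => rfl
    have hS : ∀ n, Continuous (S n) := fun n =>
      WeakDual.continuous_of_continuous_eval fun y => WeakDual.eval_continuous ((P ^ n) y)
    let B : Set (WeakDual ℝ X) := WeakDual.toStrongDual ⁻¹' Metric.closedBall 0 1
    have hB : IsCompact B := WeakDual.isCompact_closedBall 0 1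
    let K : ℕ → Set (WeakDual ℝ X) := fun n => S n '' B ∩ {g | c ≤ g f}
    have hcl : IsClosed {g : WeakDual ℝ X | c ≤ g f} :=
      isClosed_le continuous_const (WeakDual.eval_continuous f)
    have hK : ∀ n, IsCompact (K n) := fun n => (hB.image (hS n)).inter_right hcl
    obtain ⟨h, hh⟩ := IsCompact.nonempty_iInter_of_sequence_nonempty_isCompact_isClosed K
      (by
        rintro n _ ⟨⟨g, hg, rfl⟩, hg2⟩
        refine ⟨⟨S 1 g, ?_, ?_⟩, hg2⟩
        · have hg' : ‖WeakDual.toStrongDual g‖ ≤ 1 := by simpa [B] using hg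
          have : ‖(WeakDual.toStrongDual g).comp (P ^ 1)‖ ≤ 1 := by
            refine (ContinuousLinearMap.opNorm_comp_le _ _).trans ?_
            rw [pow_one]
            exact mul_le_one₀ hg' (norm_nonneg _) hP
          exact mem_closedBall_zero_iff.2 this
        · refine DFunLike.ext _ _ fun x => ?_
          rw [hSapp, hSapp, hSapp]
          simp [pow_succ'])
      (by
        intro n
        obtain ⟨g, hg1, hg2⟩ := exists_dual_vector'' ℝ ((P ^ n) f)
        refine ⟨S n (StrongDual.toWeakDual g), ⟨_, ?_, rfl⟩, ?_⟩
        · simpa [B] using hg1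
        · change c ≤ g ((P ^ n) f)
          rw [hg2]; exact hcn n)
      (hK 0) (fun n => (hK n).isClosed)
    have hz := H (WeakDual.toStrongDual h) (mem_iInter.2 fun n => by
      obtain ⟨⟨g, hg, hgh⟩, -⟩ := mem_iInter.1 hh n
      refine ⟨WeakDual.toStrongDual g, by simpa [B] using hg, ?_⟩
      rw [hTn, ← hgh]
      rfl)
    have h1 : c ≤ h f := (mem_iInter.1 hh 0).2
    have h2 : h f = 0 := hz
    linarith
end

section
/- Let (Ω,Σ,μ) be a probability space and φ : Ω → Ω a bijective bimeasurable measure-preserving transformation with Perron–Frobenius operator P on L¹(Ω,Σ,μ). If the sequence (Pⁿf) converges in L¹-norm for every f ∈ L¹(Ω,Σ,μ), then P is the identity operator: Pf = f for all f ∈ L¹(Ω,Σ,μ). -/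
open MeasureTheory Filter Set Topology
open scoped symmDiff ENNReal

theorem stmt13 {Ω : Type*} [m : MeasurableSpace Ω] (μ : Measure Ω) [IsProbabilityMeasure μ]
    (φ : Ω → Ω) (hmp : MeasurePreserving φ μ μ) (hbij : Function.Bijective φ)
    (hbi : ∀ A : Set Ω, MeasurableSet A → MeasurableSet (φ '' A))
    (P : Lp ℝ 1 μ →L[ℝ] Lp ℝ 1 μ)
    (hP : ∀ (f : Lp ℝ 1 μ) (A : Set Ω), MeasurableSet A →
      ∫ x in A, (P f) x ∂μ = ∫ x in φ ⁻¹' A, f x ∂μ)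
    (hconv : ∀ f : Lp ℝ 1 μ, ∃ g : Lp ℝ 1 μ, Tendsto (fun n : ℕ => (P ^ n) f) atTop (𝓝 g)) :
    ∀ f : Lp ℝ 1 μ, P f = f := by
  let e : Ω ≃ᵐ Ω :=
    { toEquiv := Equiv.ofBijective φ hbij
      measurable_toFun := hmp.measurable
      measurable_invFun := by
        intro A hA
        have h := hbi A hA
        have h2 : (Equiv.ofBijective φ hbij).symm ⁻¹' A = φ '' A := by
          rw [← Equiv.image_eq_preimage_symm]
          rfl
        rw [← h2] at h
        exact h }
  have he : MeasurePreserving e μ μ := hmp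
  have hes : MeasurePreserving e.symm μ μ := he.symm e
  have key : ∀ f : Lp ℝ 1 μ, P f = Lp.compMeasurePreserving e.symm hes f := by
    intro f
    apply Lp.ext
    apply Integrable.ae_eq_of_forall_setIntegral_eq _ _ (L1.integrable_coeFn _)
      (L1.integrable_coeFn _)
    intro A hA _
    rw [hP f A hA, setIntegral_congr_ae hA
      ((Lp.coeFn_compMeasurePreserving f hes).mono fun x hx _ => hx)]
    have h := hes.setIntegral_preimage_emb e.symm.measurableEmbedding (fun x => f x) (φ ⁻¹' A)
    have h2 : e.symm ⁻¹' (φ ⁻¹' A) = A := by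
      ext x
      have : φ (e.symm x) = x := e.apply_symm_apply x
      simp [this]
    rw [h2] at h
    exact h.symm
  have hn : ∀ f : Lp ℝ 1 μ, ‖P f‖ = ‖f‖ := by
    intro f
    rw [key, Lp.norm_compMeasurePreserving]
  have hnn : ∀ (n : ℕ) (f : Lp ℝ 1 μ), ‖(P ^ n) f‖ = ‖f‖ := by
    intro n
    induction n with
    | zero => intro f; simp
    | succ k ih =>
      intro f
      rw [pow_succ, ContinuousLinearMap.mul_apply, ih, hn]
  intro f
  obtain ⟨g, hg⟩ := hconv f
  have h1 := ((tendsto_add_atTop_iff_nat 1).2 hg).sub hg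
  have h2 := h1.norm
  have h3 : ∀ n : ℕ, ‖(P ^ (n + 1)) f - (P ^ n) f‖ = ‖P f - f‖ := by
    intro n
    rw [pow_succ, ContinuousLinearMap.mul_apply, ← map_sub, hnn]
  simp only [h3, sub_self, norm_zero] at h2
  have h4 := tendsto_nhds_unique h2 tendsto_const_nhds
  exact sub_eq_zero.1 (norm_eq_zero.1 h4.symm)
end
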